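/- arXiv:1808.02133 — 5 statements merged into one kernel-verified Lean document; each statement's English description precedes it below -/
import Mathlib

section
/- Let s ∈ (0,1), 1 < p < ∞, and f ∈ L^p(ℝ^d) be a scalar function with Poisson integral u(x,t) = (p_t ∗ f)(x). Then there exists a constant C = C(d) > 0 such that ∫_{ℝ^d} ∫_{ℝ^d} |u(x + y, |y|) − u(x, |y|)|^p / |y|^{d+sp} dx dy ≤ C ∫_0^∞ ‖∇_x u(·,t)‖_{L^p(ℝ^d)}^p / t^{sp−p+1} dt. -/
open MeasureTheory Filter Set
open scoped ENNReal NNReal Topology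

noncomputable section

abbrev Ed (d : ℕ) : Type := EuclideanSpace ℝ (Fin d)

/-- The surface measure `ω_d` of the unit sphere in `ℝ^{d+1}`. -/
def sphereVol (d : ℕ) : ℝ :=
  ((d : ℝ) + 1) * (volume (Metric.ball (0 : EuclideanSpace ℝ (Fin (d+1))) 1)).toReal

/-- The Poisson kernel `p_t(x)` for the upper half-space `ℝ^d × (0,∞)`. -/
def poissonKernelEd (d : ℕ) (t : ℝ) (x : Ed d) : ℝ :=
  (2 / sphereVol d) * t / (‖x‖ ^ 2 + t ^ 2) ^ (((d : ℝ) + 1) / 2)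

/-- The (componentwise) Poisson integral `u(x,t) = (p_t ∗ f)(x)` of a vector field. -/
def poissonInt (d m : ℕ) (f : Ed d → Ed m) (x : Ed d) (t : ℝ) : Ed m :=
  ∫ y, poissonKernelEd d t y • f (x - y)

/-- The Poisson integral `u(x,t) = (p_t ∗ f)(x)` of a scalar function. -/
def poissonIntS (d : ℕ) (f : Ed d → ℝ) (x : Ed d) (t : ℝ) : ℝ :=
  ∫ y, poissonKernelEd d t y * f (x - y)

/-!
Along the segment from `x` to `x + y` the increment of `u(·, t)` is at most
`‖y‖ ∫₀¹ ‖∇ₓu(x + ry, t)‖ dr`, so Jensen's inequality and translation invariance give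
`‖u(· + y, t) - u(·, t)‖_p ≤ ‖y‖ ‖∇ₓu(·, t)‖_p`. Taking `t = ‖y‖` makes the remaining integrand a
function of `‖y‖`, and in polar coordinates `t^{d-1} · t^p · t^{-d-sp} = t^{-(sp-p+1)}`; the
constant is the area of the unit sphere of `ℝ^d`. That `u(·, t)` is differentiable follows by
differentiating under the integral sign: the kernel `K_t(x) = (‖x‖² + t²)^{-a}` satisfies
`‖∇K_t‖ ≤ (a / t) K_t`, and `K_t(z - y)` and `K_s(x - y)` are comparable uniformly in `y`.
-/

section LpTranslate

variable {F : Type*} [NormedAddCommGroup F] [NormedSpace ℝ F] [CompleteSpace F] {p : ℝ}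

lemma rpow_lintegral_le_lintegral_rpow {α : Type*} [MeasurableSpace α] {μ : Measure α}
    [IsProbabilityMeasure μ] {h : α → ℝ≥0∞} (hh : AEMeasurable h μ) (hp : 1 ≤ p) :
    (∫⁻ a, h a ∂μ) ^ p ≤ ∫⁻ a, h a ^ p ∂μ := by
  have hp0 : 0 < p := by positivity
  have hnorm := eLpNorm'_le_eLpNorm'_of_exponent_le one_pos hp μ hh.aestronglyMeasurable
  have hpow := ENNReal.rpow_le_rpow hnorm hp0.le
  rw [← lintegral_rpow_enorm_eq_rpow_eLpNorm' hp0] at hpow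
  simpa [eLpNorm'] using hpow

lemma enorm_sub_le_lintegral_enorm_deriv {f : ℝ → F} {a b : ℝ} (hab : a ≤ b)
    (hf : ∀ x ∈ Icc a b, DifferentiableAt ℝ f x) :
    ‖f b - f a‖ₑ ≤ ∫⁻ x in Ioc a b, ‖deriv f x‖ₑ := by
  by_cases hfin : ∫⁻ x in Ioc a b, ‖deriv f x‖ₑ = ⊤
  · exact hfin ▸ le_top
  have hint : IntervalIntegrable (deriv f) volume a b :=
    (intervalIntegrable_iff_integrableOn_Ioc_of_le hab).2
      ⟨aestronglyMeasurable_deriv f _, lt_top_iff_ne_top.2 hfin⟩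
  have hftc : ∫ x in a..b, deriv f x = f b - f a :=
    intervalIntegral.integral_eq_sub_of_hasDerivAt
      (fun x hx ↦ (hf x (uIcc_of_le hab ▸ hx)).hasDerivAt) hint
  rw [← hftc, intervalIntegral.integral_of_le hab]
  exact enorm_integral_le_lintegral_enorm _

variable {E : Type*} [NormedAddCommGroup E] [NormedSpace ℝ E] {g : E → F}

lemma enorm_sub_translate_le_lintegral_enorm_fderiv (hg : Differentiable ℝ g) (x y : E) :
    ‖g (x + y) - g x‖ₑ ≤ ∫⁻ r in Ioc (0 : ℝ) 1, ‖y‖ₑ * ‖fderiv ℝ g (x + r • y)‖ₑ := by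
  have hderiv (r : ℝ) : HasDerivAt (fun r : ℝ ↦ g (x + r • y)) (fderiv ℝ g (x + r • y) y) r := by
    have hline : HasDerivAt (fun r : ℝ ↦ x + r • y) y r := by
      simpa using ((hasDerivAt_id r).smul_const y).const_add x
    exact (hg (x + r • y)).hasFDerivAt.comp_hasDerivAt r hline
  calc ‖g (x + y) - g x‖ₑ
      ≤ ∫⁻ r in Ioc (0 : ℝ) 1, ‖deriv (fun r : ℝ ↦ g (x + r • y)) r‖ₑ := by
        simpa using enorm_sub_le_lintegral_enorm_deriv zero_le_one
          fun r _ ↦ (hderiv r).differentiableAt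
    _ ≤ ∫⁻ r in Ioc (0 : ℝ) 1, ‖y‖ₑ * ‖fderiv ℝ g (x + r • y)‖ₑ := by
        gcongr with r
        rw [(hderiv r).deriv, mul_comm]
        exact ContinuousLinearMap.le_opENorm _ _

variable [MeasurableSpace E] [BorelSpace E]

lemma lintegral_enorm_sub_translate_rpow_le [SecondCountableTopology E] {μ : Measure E} [SFinite μ]
    [μ.IsAddRightInvariant] (hg : Differentiable ℝ g) (hp : 1 ≤ p) (y : E) :
    ∫⁻ x, ‖g (x + y) - g x‖ₑ ^ p ∂μ ≤ ‖y‖ₑ ^ p * ∫⁻ x, ‖fderiv ℝ g x‖ₑ ^ p ∂μ := by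
  have hp0 : 0 ≤ p := by positivity
  have hmeas : Measurable fun z : E × ℝ ↦ ‖y‖ₑ * ‖fderiv ℝ g (z.1 + z.2 • y)‖ₑ :=
    ((measurable_fderiv ℝ g).comp (by fun_prop)).enorm.const_mul _
  have : IsProbabilityMeasure (volume.restrict (Ioc (0 : ℝ) 1)) := ⟨by simp⟩
  calc ∫⁻ x, ‖g (x + y) - g x‖ₑ ^ p ∂μ
      ≤ ∫⁻ x, (∫⁻ r in Ioc (0 : ℝ) 1, ‖y‖ₑ * ‖fderiv ℝ g (x + r • y)‖ₑ) ^ p ∂μ := by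
        gcongr with x
        exact enorm_sub_translate_le_lintegral_enorm_fderiv hg x y
    _ ≤ ∫⁻ x, (∫⁻ r in Ioc (0 : ℝ) 1, (‖y‖ₑ * ‖fderiv ℝ g (x + r • y)‖ₑ) ^ p) ∂μ := by
        gcongr with x
        exact rpow_lintegral_le_lintegral_rpow (hmeas.comp measurable_prodMk_left).aemeasurable hp
    _ = ∫⁻ r in Ioc (0 : ℝ) 1, ∫⁻ x, (‖y‖ₑ * ‖fderiv ℝ g (x + r • y)‖ₑ) ^ p ∂μ :=
        lintegral_lintegral_swap (hmeas.pow_const p).aemeasurable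
    _ = ∫⁻ _ in Ioc (0 : ℝ) 1, ∫⁻ x, (‖y‖ₑ * ‖fderiv ℝ g x‖ₑ) ^ p ∂μ := by
        congr! 2 with r
        exact lintegral_add_right_eq_self (fun x ↦ (‖y‖ₑ * ‖fderiv ℝ g x‖ₑ) ^ p) (r • y)
    _ = ‖y‖ₑ ^ p * ∫⁻ x, ‖fderiv ℝ g x‖ₑ ^ p ∂μ := by
        simp only [ENNReal.mul_rpow_of_nonneg _ _ hp0, lintegral_const, measure_univ, mul_one]
        exact lintegral_const_mul _ ((measurable_fderiv ℝ g).enorm.pow_const p)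

end LpTranslate

section Polar

open Module Measure

variable {E : Type*} [NormedAddCommGroup E] [NormedSpace ℝ E] [FiniteDimensional ℝ E]
  [MeasurableSpace E] [BorelSpace E] (μ : Measure E) [μ.IsAddHaarMeasure]

lemma lintegral_volumeIoiPow (n : ℕ) (H : ℝ → ℝ≥0∞) :
    ∫⁻ t, H t ∂volumeIoiPow n = ∫⁻ t in Ioi (0 : ℝ), ENNReal.ofReal (t ^ n) * H t := by
  rw [volumeIoiPow, lintegral_withDensity_eq_lintegral_mul_non_measurable _ (by fun_prop)
    (by simp)]
  exact lintegral_subtype_comap measurableSet_Ioi fun t : ℝ ↦ ENNReal.ofReal (t ^ n) * H t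

-- `H` need not be measurable, so Tonelli only gives an inequality.
lemma setLIntegral_compl_zero_fun_norm_addHaar_le (H : ℝ → ℝ≥0∞) :
    ∫⁻ x in {0}ᶜ, H ‖x‖ ∂μ ≤ finrank ℝ E * μ (Metric.ball 0 1) *
      ∫⁻ t in Ioi (0 : ℝ), ENNReal.ofReal (t ^ ((finrank ℝ E : ℝ) - 1)) * H t :=
  calc ∫⁻ x in {0}ᶜ, H ‖x‖ ∂μ
      = ∫⁻ x : ({0}ᶜ : Set E), H ‖x.1‖ ∂(μ.comap (↑)) :=
        (lintegral_subtype_comap (measurableSet_singleton _).compl fun x : E ↦ H ‖x‖).symm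
    _ = ∫⁻ z, H z.2 ∂(μ.toSphere.prod (volumeIoiPow (finrank ℝ E - 1))) := by
        simpa using μ.measurePreserving_homeomorphUnitSphereProd.lintegral_comp_emb
          (Homeomorph.measurableEmbedding _) fun z ↦ H z.2
    _ ≤ ∫⁻ _, (∫⁻ t, H t ∂volumeIoiPow (finrank ℝ E - 1)) ∂μ.toSphere :=
        lintegral_prod_le _
    _ = finrank ℝ E * μ (Metric.ball 0 1) *
          ∫⁻ t in Ioi (0 : ℝ), ENNReal.ofReal (t ^ (finrank ℝ E - 1)) * H t := by
        rw [lintegral_const, toSphere_apply_univ, mul_comm, lintegral_volumeIoiPow]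
    _ = finrank ℝ E * μ (Metric.ball 0 1) *
          ∫⁻ t in Ioi (0 : ℝ), ENNReal.ofReal (t ^ ((finrank ℝ E : ℝ) - 1)) * H t := by
        rcases (finrank ℝ E).eq_zero_or_pos with hdim | hdim
        · simp [hdim]
        · simp only [← Nat.cast_pred hdim, Real.rpow_natCast]

variable {F : Type*} [NormedAddCommGroup F] [NormedSpace ℝ F] [CompleteSpace F]

lemma lintegral_lintegral_enorm_sub_translate_norm_rpow_le {u : E → ℝ → F}
    (hu : ∀ t, 0 < t → Differentiable ℝ (u · t)) {p : ℝ} (hp : 1 ≤ p) (w : ℝ → ℝ≥0∞) :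
    ∫⁻ y, (∫⁻ x, ‖u (x + y) ‖y‖ - u x ‖y‖‖ₑ ^ p ∂μ) * w ‖y‖ ∂μ ≤
      finrank ℝ E * μ (Metric.ball 0 1) * ∫⁻ t in Ioi (0 : ℝ),
        ENNReal.ofReal (t ^ ((finrank ℝ E : ℝ) - 1)) *
          (ENNReal.ofReal t ^ p * (∫⁻ x, ‖fderiv ℝ (u · t) x‖ₑ ^ p ∂μ) * w t) := by
  have hp0 : 0 < p := by positivity
  have hsupport : (Function.support fun y ↦
      (∫⁻ x, ‖u (x + y) ‖y‖ - u x ‖y‖‖ₑ ^ p ∂μ) * w ‖y‖) ⊆ {0}ᶜ := by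
    rintro y hy rfl
    simp [hp0] at hy
  rw [← setLIntegral_eq_of_support_subset hsupport]
  refine le_trans (setLIntegral_mono' (measurableSet_singleton 0).compl fun y hy ↦ ?_)
    (setLIntegral_compl_zero_fun_norm_addHaar_le μ fun t ↦
      ENNReal.ofReal t ^ p * (∫⁻ x, ‖fderiv ℝ (u · t) x‖ₑ ^ p ∂μ) * w t)
  have hy0 : 0 < ‖y‖ := norm_pos_iff.2 hy
  rw [ofReal_norm]
  gcongr
  exact lintegral_enorm_sub_translate_rpow_le (hu _ hy0) hp y

end Polar

section InvMultiquadric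

variable {E : Type*} [NormedAddCommGroup E]

/-- The inverse multiquadric `(‖x‖² + t²)^{-a}`; for `a = (d + 1) / 2` on `ℝ^d` this is the Poisson
kernel `p_t` up to a factor depending on `t` and `d` only. -/
def invMultiquadric (a t : ℝ) (x : E) : ℝ :=
  (‖x‖ ^ 2 + t ^ 2) ^ (-a)

variable {a s t : ℝ}

lemma invMultiquadric_pos (ht : 0 < t) (x : E) : 0 < invMultiquadric a t x := by
  unfold invMultiquadric
  positivity

lemma continuous_invMultiquadric (ht : 0 < t) : Continuous (invMultiquadric a t : E → ℝ) :=
  Continuous.rpow_const (by fun_prop) fun x ↦ Or.inl (by positivity)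

lemma norm_sub_sq_add_sq_le (s : ℝ) (ht : 0 < t) (x y z : E) :
    ‖x - y‖ ^ 2 + s ^ 2 ≤ (2 + (2 * ‖x - z‖ ^ 2 + s ^ 2) / t ^ 2) * (‖z - y‖ ^ 2 + t ^ 2) := by
  have htri : ‖x - y‖ ≤ ‖x - z‖ + ‖z - y‖ := norm_sub_le_norm_sub_add_norm_sub x z y
  have hsq : ‖x - y‖ ^ 2 ≤ 2 * (‖x - z‖ ^ 2 + ‖z - y‖ ^ 2) :=
    (pow_le_pow_left₀ (norm_nonneg _) htri 2).trans add_sq_le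
  calc ‖x - y‖ ^ 2 + s ^ 2
      ≤ 2 * ‖z - y‖ ^ 2 + (2 * ‖x - z‖ ^ 2 + s ^ 2) / t ^ 2 * t ^ 2 := by
        rw [div_mul_cancel₀ _ (by positivity)]
        linarith
    _ ≤ 2 * (‖z - y‖ ^ 2 + t ^ 2)
          + (2 * ‖x - z‖ ^ 2 + s ^ 2) / t ^ 2 * (‖z - y‖ ^ 2 + t ^ 2) := by
        gcongr
        · exact le_add_of_nonneg_right (sq_nonneg t)
        · exact le_add_of_nonneg_left (sq_nonneg _)
    _ = _ := by ring

lemma invMultiquadric_sub_le (ha : 0 ≤ a) (hs : 0 < s) (ht : 0 < t) (x y z : E) :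
    invMultiquadric a t (z - y) ≤
      (2 + (2 * ‖x - z‖ ^ 2 + s ^ 2) / t ^ 2) ^ a * invMultiquadric a s (x - y) := by
  set c := 2 + (2 * ‖x - z‖ ^ 2 + s ^ 2) / t ^ 2
  have hc : 0 < c := by positivity
  have hle : (‖x - y‖ ^ 2 + s ^ 2) / c ≤ ‖z - y‖ ^ 2 + t ^ 2 :=
    (div_le_iff₀' hc).2 (norm_sub_sq_add_sq_le s ht x y z)
  calc invMultiquadric a t (z - y)
      ≤ ((‖x - y‖ ^ 2 + s ^ 2) / c) ^ (-a) :=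
        Real.rpow_le_rpow_of_nonpos (by positivity) hle (neg_nonpos.2 ha)
    _ = c ^ a * invMultiquadric a s (x - y) := by
        rw [Real.div_rpow (by positivity) hc.le, Real.rpow_neg hc.le, div_inv_eq_mul, mul_comm,
          invMultiquadric]

variable [MeasurableSpace E] {μ : Measure E}
  {F : Type*} [NormedAddCommGroup F] [NormedSpace ℝ F] {f : E → F} {x : E}

lemma aestronglyMeasurable_of_invMultiquadric_smul [OpensMeasurableSpace E] (ht : 0 < t)
    (hf : AEStronglyMeasurable (fun y ↦ invMultiquadric a t (x - y) • f y) μ) :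
    AEStronglyMeasurable f μ := by
  have hcont : Continuous fun y ↦ (invMultiquadric a t (x - y))⁻¹ :=
    ((continuous_invMultiquadric ht).comp (by fun_prop)).inv₀ fun y ↦ (invMultiquadric_pos ht _).ne'
  refine (hcont.aestronglyMeasurable.smul hf).congr (Eventually.of_forall fun y ↦ ?_)
  exact inv_smul_smul₀ (invMultiquadric_pos ht _).ne' (f y)

lemma integrable_invMultiquadric_sub_smul [OpensMeasurableSpace E] (ha : 0 ≤ a) (hs : 0 < s)
    (ht : 0 < t) (hf : Integrable (fun y ↦ invMultiquadric a s (x - y) • f y) μ) (z : E) :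
    Integrable (fun y ↦ invMultiquadric a t (z - y) • f y) μ := by
  have hcont : Continuous fun y ↦ invMultiquadric a t (z - y) :=
    (continuous_invMultiquadric ht).comp (by fun_prop)
  refine (hf.norm.const_mul ((2 + (2 * ‖x - z‖ ^ 2 + s ^ 2) / t ^ 2) ^ a)).mono'
    (hcont.aestronglyMeasurable.smul (aestronglyMeasurable_of_invMultiquadric_smul hs hf.1))
    (Eventually.of_forall fun y ↦ ?_)
  rw [norm_smul, norm_smul, ← mul_assoc, Real.norm_of_nonneg (invMultiquadric_pos ht _).le,
    Real.norm_of_nonneg (invMultiquadric_pos hs _).le]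
  gcongr
  exact invMultiquadric_sub_le ha hs ht x y z

end InvMultiquadric

section Differentiability

variable {E : Type*} [NormedAddCommGroup E] [InnerProductSpace ℝ E] {a t : ℝ}

lemma hasFDerivAt_invMultiquadric (a : ℝ) (ht : 0 < t) (x : E) :
    HasFDerivAt (invMultiquadric a t) ((-2 * a * invMultiquadric (a + 1) t x) • innerSL ℝ x) x := by
  have hbase : HasFDerivAt (fun x : E ↦ ‖x‖ ^ 2 + t ^ 2) (2 • innerSL ℝ x) x :=
    (hasStrictFDerivAt_norm_sq x).hasFDerivAt.add_const _
  refine (hbase.rpow_const (p := -a) (Or.inl (by positivity))).congr_fderiv ?_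
  rw [invMultiquadric, ← Nat.cast_smul_eq_nsmul ℝ, smul_smul, neg_add', Nat.cast_ofNat]
  congr 1
  ring

lemma continuous_fderiv_invMultiquadric (a : ℝ) (ht : 0 < t) :
    Continuous (fderiv ℝ (invMultiquadric a t : E → ℝ)) := by
  rw [funext fun x : E ↦ (hasFDerivAt_invMultiquadric a ht x).fderiv]
  exact (continuous_const.mul (continuous_invMultiquadric ht)).smul (innerSL ℝ).continuous

lemma norm_fderiv_invMultiquadric_le (ha : 0 ≤ a) (ht : 0 < t) (x : E) :
    ‖fderiv ℝ (invMultiquadric a t) x‖ ≤ a / t * invMultiquadric a t x := by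
  have hbase : 0 < ‖x‖ ^ 2 + t ^ 2 := by positivity
  have hpow : invMultiquadric (a + 1) t x = invMultiquadric a t x / (‖x‖ ^ 2 + t ^ 2) := by
    rw [invMultiquadric, neg_add', Real.rpow_sub_one hbase.ne', invMultiquadric]
  have hquot : 2 * ‖x‖ / (‖x‖ ^ 2 + t ^ 2) ≤ 1 / t := by
    rw [div_le_div_iff₀ hbase ht, one_mul]
    exact two_mul_le_add_sq _ _
  have hK := (invMultiquadric_pos (a := a) ht x).le
  calc ‖fderiv ℝ (invMultiquadric a t) x‖
      = a * (2 * ‖x‖ / (‖x‖ ^ 2 + t ^ 2)) * invMultiquadric a t x := by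
        rw [(hasFDerivAt_invMultiquadric a ht x).fderiv, hpow, norm_smul, innerSL_apply_norm,
          norm_mul, norm_mul, norm_neg, Real.norm_of_nonneg ha, Real.norm_ofNat,
          Real.norm_of_nonneg (by positivity)]
        ring
    _ ≤ a * (1 / t) * invMultiquadric a t x := by gcongr
    _ = a / t * invMultiquadric a t x := by ring

variable [MeasurableSpace E] [OpensMeasurableSpace E] [SecondCountableTopology E] {μ : Measure E}
  {F : Type*} [NormedAddCommGroup F] [NormedSpace ℝ F] {f : E → F} {x : E}

lemma differentiable_integral_invMultiquadric_sub_smul (ha : 0 ≤ a) (ht : 0 < t)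
    (hf : Integrable (fun y ↦ invMultiquadric a t (x - y) • f y) μ) :
    Differentiable ℝ fun x ↦ ∫ y, invMultiquadric a t (x - y) • f y ∂μ := by
  intro x₀
  have hint (z : E) : Integrable (fun y ↦ invMultiquadric a t (z - y) • f y) μ :=
    integrable_invMultiquadric_sub_smul ha ht ht hf z
  have hderiv (y z : E) : HasFDerivAt (fun z ↦ invMultiquadric a t (z - y) • f y)
      ((fderiv ℝ (invMultiquadric a t) (z - y)).smulRight (f y)) z :=
    ((hasFDerivAt_comp_sub y).2
      (hasFDerivAt_invMultiquadric a ht _).differentiableAt.hasFDerivAt).smul_const (f y)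
  have hmeas : AEStronglyMeasurable
      (fun y ↦ (fderiv ℝ (invMultiquadric a t) (x₀ - y)).smulRight (f y)) μ :=
    (ContinuousLinearMap.smulRightL ℝ E F).aestronglyMeasurable_comp₂
      ((continuous_fderiv_invMultiquadric a ht).comp (by fun_prop)).aestronglyMeasurable
      (aestronglyMeasurable_of_invMultiquadric_smul ht hf.1)
  have hbound (y z : E) (hz : z ∈ Metric.ball x₀ t) :
      ‖(fderiv ℝ (invMultiquadric a t) (z - y)).smulRight (f y)‖ ≤
        a / t * 5 ^ a * ‖invMultiquadric a t (x₀ - y) • f y‖ := by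
    have hconst : 2 + (2 * ‖x₀ - z‖ ^ 2 + t ^ 2) / t ^ 2 ≤ 5 := by
      have : ‖x₀ - z‖ ≤ t := (mem_ball_iff_norm'.1 hz).le
      have : (2 * ‖x₀ - z‖ ^ 2 + t ^ 2) / t ^ 2 ≤ 3 := by
        rw [div_le_iff₀ (by positivity)]
        nlinarith [norm_nonneg (x₀ - z)]
      linarith
    have hK := (invMultiquadric_pos (a := a) ht (x₀ - y)).le
    calc ‖(fderiv ℝ (invMultiquadric a t) (z - y)).smulRight (f y)‖
        = ‖fderiv ℝ (invMultiquadric a t) (z - y)‖ * ‖f y‖ := by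
          rw [ContinuousLinearMap.norm_smulRight_apply]
      _ ≤ a / t * invMultiquadric a t (z - y) * ‖f y‖ := by
          gcongr
          exact norm_fderiv_invMultiquadric_le ha ht _
      _ ≤ a / t * (5 ^ a * invMultiquadric a t (x₀ - y)) * ‖f y‖ := by
          gcongr
          refine (invMultiquadric_sub_le ha ht ht x₀ y z).trans ?_
          gcongr
      _ = a / t * 5 ^ a * ‖invMultiquadric a t (x₀ - y) • f y‖ := by
          rw [norm_smul, Real.norm_of_nonneg hK]
          ring
  exact (hasFDerivAt_integral_of_dominated_of_fderiv_le (Metric.ball_mem_nhds x₀ ht)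
    (Eventually.of_forall fun z ↦ (hint z).1) (hint x₀) hmeas (Eventually.of_forall hbound)
    ((hint x₀).norm.const_mul _) (Eventually.of_forall fun y z _ ↦ hderiv y z)).differentiableAt

end Differentiability

lemma integrable_smul_of_memLp {α F : Type*} [MeasurableSpace α] {μ : Measure α}
    [NormedAddCommGroup F] [NormedSpace ℝ F] {g : α → ℝ} {f : α → F} {p : ℝ≥0∞} {C : ℝ}
    (hg : Integrable g μ) (hgC : ∀ᵐ x ∂μ, ‖g x‖ ≤ C) (hf : MemLp f p μ) (hp : 1 ≤ p) :
    Integrable (fun x ↦ g x • f x) μ := by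
  -- `ν` is finite and bounded by a multiple of `μ`, so `L^p(μ) ⊆ L^p(ν) ⊆ L¹(ν)`.
  let ν : Measure α := μ.withDensity fun x ↦ ‖g x‖ₑ
  have hνfin : IsFiniteMeasure ν := isFiniteMeasure_withDensity hg.2.ne
  have hνle : ν ≤ ENNReal.ofReal C • μ := by
    rw [← withDensity_const]
    refine withDensity_mono (hgC.mono fun x hx ↦ ?_)
    simpa only [ofReal_norm] using ENNReal.ofReal_le_ofReal hx
  have hfν : Integrable f ν :=
    (hf.of_measure_le_smul ENNReal.ofReal_ne_top hνle).integrable hp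
  have hnorm : Integrable (fun x ↦ ‖g x‖₊ • f x) μ :=
    (integrable_withDensity_iff_integrable_smul₀ hg.1.nnnorm.aemeasurable).1 hfν
  exact hnorm.congr'_enorm (hg.1.smul hf.1)
    (Eventually.of_forall fun x ↦ by simp [enorm_smul, NNReal.smul_def])

section PoissonIntegral

variable {d : ℕ} {F : Type*} [NormedAddCommGroup F] [NormedSpace ℝ F] {f : Ed d → F} {t : ℝ}

/-- The Poisson integral `p_t ∗ f` of a function with values in a real normed space, agreeing
definitionally with `poissonIntS` for real-valued `f`. -/
def poissonIntegral (f : Ed d → F) (x : Ed d) (t : ℝ) : F :=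
  ∫ y, poissonKernelEd d t y • f (x - y)

lemma poissonKernelEd_eq_mul_invMultiquadric (t : ℝ) (x : Ed d) :
    poissonKernelEd d t x = 2 / sphereVol d * t * invMultiquadric (((d : ℝ) + 1) / 2) t x := by
  rw [poissonKernelEd, invMultiquadric, Real.rpow_neg (by positivity), div_eq_mul_inv _ (_ ^ _)]

lemma poissonIntegral_eq_smul_integral (f : Ed d → F) (x : Ed d) (t : ℝ) :
    poissonIntegral f x t =
      (2 / sphereVol d * t) • ∫ y, invMultiquadric (((d : ℝ) + 1) / 2) t (x - y) • f y := by
  rw [poissonIntegral, ← integral_sub_left_eq_self _ volume x, ← integral_smul]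
  simp only [poissonKernelEd_eq_mul_invMultiquadric, mul_smul, sub_sub_cancel]

lemma differentiable_poissonIntegral (ht : 0 < t)
    (hf : Integrable fun y ↦ (1 + ‖y‖ ^ 2) ^ (-((d : ℝ) + 1) / 2) • f y) :
    Differentiable ℝ (poissonIntegral f · t) := by
  have ha : 0 ≤ ((d : ℝ) + 1) / 2 := by positivity
  have hK : Integrable fun y ↦ invMultiquadric (((d : ℝ) + 1) / 2) 1 (0 - y) • f y := by
    simpa only [invMultiquadric, zero_sub, norm_neg, one_pow, add_comm _ (1 : ℝ), neg_div] using hf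
  simp only [poissonIntegral_eq_smul_integral]
  exact (differentiable_integral_invMultiquadric_sub_smul ha ht
    (integrable_invMultiquadric_sub_smul ha one_pos ht hK 0)).const_smul _

lemma integrable_one_add_norm_sq_rpow_smul_of_memLp {p : ℝ≥0∞} (hp : 1 ≤ p) (hf : MemLp f p) :
    Integrable fun y ↦ (1 + ‖y‖ ^ 2) ^ (-((d : ℝ) + 1) / 2) • f y := by
  refine integrable_smul_of_memLp (C := 1) (integrable_rpow_neg_one_add_norm_sq (by simp))
    (Eventually.of_forall fun y ↦ ?_) hf hp
  rw [Real.norm_of_nonneg (by positivity)]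
  refine Real.rpow_le_one_of_one_le_of_nonpos (le_add_of_nonneg_right (by positivity)) ?_
  rw [neg_div]
  exact neg_nonpos.2 (by positivity)

end PoissonIntegral

lemma eLpNorm_ofReal_rpow {α F : Type*} [MeasurableSpace α] {μ : Measure α} [NormedAddCommGroup F]
    {p : ℝ} (hp : 0 < p) (f : α → F) :
    eLpNorm f (ENNReal.ofReal p) μ ^ p = ∫⁻ x, ‖f x‖ₑ ^ p ∂μ := by
  lift p to ℝ≥0 using hp.le
  rw [ENNReal.ofReal_coe_nnreal, eLpNorm_nnreal_pow_eq_lintegral (by exact_mod_cast hp.ne')]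

lemma lintegral_ofReal_norm_rpow_div {α F : Type*} [MeasurableSpace α] {μ : Measure α}
    [NormedAddCommGroup F] {p c : ℝ} (hp : 0 ≤ p) (hc : 0 ≤ c) (f : α → F) :
    ∫⁻ x, ENNReal.ofReal (‖f x‖ ^ p / c) ∂μ = (∫⁻ x, ‖f x‖ₑ ^ p ∂μ) * ENNReal.ofReal c⁻¹ := by
  rw [← lintegral_mul_const' _ _ ENNReal.ofReal_ne_top]
  congr! 2 with x
  rw [div_eq_mul_inv, ENNReal.ofReal_mul' (inv_nonneg.2 hc),
    ← ENNReal.ofReal_rpow_of_nonneg (norm_nonneg _) hp, ofReal_norm]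

lemma lintegral_lintegral_sub_translate_norm_le {d : ℕ} {F : Type*} [NormedAddCommGroup F]
    [NormedSpace ℝ F] [CompleteSpace F] {u : Ed d → ℝ → F}
    (hu : ∀ t, 0 < t → Differentiable ℝ (u · t)) (s : ℝ) {p : ℝ} (hp : 1 ≤ p) :
    ∫⁻ y, ∫⁻ x, ENNReal.ofReal (‖u (x + y) ‖y‖ - u x ‖y‖‖ ^ p / ‖y‖ ^ ((d : ℝ) + s * p)) ≤
      d * volume (Metric.ball (0 : Ed d) 1) *
        ∫⁻ t in Ioi (0 : ℝ), eLpNorm (fun x ↦ fderiv ℝ (u · t) x) (ENNReal.ofReal p) volume ^ p *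
          ENNReal.ofReal (1 / t ^ (s * p - p + 1)) := by
  have hp0 : 0 < p := by positivity
  have hpow {t : ℝ} (ht : 0 < t) :
      t ^ ((d : ℝ) - 1) * t ^ p * (t ^ ((d : ℝ) + s * p))⁻¹ = 1 / t ^ (s * p - p + 1) := by
    rw [one_div, ← Real.rpow_neg ht.le, ← Real.rpow_neg ht.le, ← Real.rpow_add ht,
      ← Real.rpow_add ht]
    ring_nf
  calc ∫⁻ y, ∫⁻ x, ENNReal.ofReal (‖u (x + y) ‖y‖ - u x ‖y‖‖ ^ p / ‖y‖ ^ ((d : ℝ) + s * p))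
      = ∫⁻ y, (∫⁻ x, ‖u (x + y) ‖y‖ - u x ‖y‖‖ₑ ^ p) *
          ENNReal.ofReal (‖y‖ ^ ((d : ℝ) + s * p))⁻¹ := by
        congr! 2 with y
        exact lintegral_ofReal_norm_rpow_div hp0.le (by positivity) _
    _ ≤ d * volume (Metric.ball (0 : Ed d) 1) * ∫⁻ t in Ioi (0 : ℝ),
          ENNReal.ofReal (t ^ ((d : ℝ) - 1)) * (ENNReal.ofReal t ^ p *
            (∫⁻ x, ‖fderiv ℝ (u · t) x‖ₑ ^ p) * ENNReal.ofReal (t ^ ((d : ℝ) + s * p))⁻¹) := by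
        simpa using lintegral_lintegral_enorm_sub_translate_norm_rpow_le volume hu hp
          fun t ↦ ENNReal.ofReal (t ^ ((d : ℝ) + s * p))⁻¹
    _ = _ := by
        congr 1
        refine setLIntegral_congr_fun measurableSet_Ioi fun t (ht : 0 < t) ↦ ?_
        rw [eLpNorm_ofReal_rpow hp0, ← hpow ht, ENNReal.ofReal_mul (by positivity),
          ENNReal.ofReal_mul (by positivity), ENNReal.ofReal_rpow_of_pos ht]
        ring

theorem poisson_integral_translate_estimate_general (d : ℕ) :
    ∃ C : ℝ, 0 < C ∧
      ∀ {F : Type*} [NormedAddCommGroup F] [NormedSpace ℝ F] [CompleteSpace F]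
        (s p : ℝ), 1 ≤ p →
        ∀ f : Ed d → F, Integrable (fun y ↦ (1 + ‖y‖ ^ 2) ^ (-((d : ℝ) + 1) / 2) • f y) →
          (∫⁻ y : Ed d, ∫⁻ x : Ed d,
              ENNReal.ofReal
                (‖poissonIntegral f (x + y) ‖y‖ - poissonIntegral f x ‖y‖‖ ^ p /
                  ‖y‖ ^ ((d : ℝ) + s * p))) ≤
            ENNReal.ofReal C *
              ∫⁻ t in Ioi (0 : ℝ),
                (eLpNorm (fun x ↦ fderiv ℝ (poissonIntegral f · t) x)
                    (ENNReal.ofReal p) volume) ^ p *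
                  ENNReal.ofReal (1 / t ^ (s * p - p + 1)) := by
  have hfin : (d : ℝ≥0∞) * volume (Metric.ball (0 : Ed d) 1) ≠ ⊤ := by finiteness
  -- The first summand vanishes in dimension `0`.
  refine ⟨(d * volume (Metric.ball (0 : Ed d) 1)).toReal + 1, by positivity, ?_⟩
  intro F _ _ _ s p hp f hf
  refine (lintegral_lintegral_sub_translate_norm_le
    (fun t ht ↦ differentiable_poissonIntegral ht hf) s hp).trans ?_
  gcongr
  rw [ENNReal.le_ofReal_iff_toReal_le hfin (by positivity)]
  exact le_add_of_nonneg_right zero_le_one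

/-- Estimate of the translated-in-time difference of the Poisson integral:
`∫∫ |u(x+y,|y|) − u(x,|y|)|^p / |y|^{d+sp} dx dy ≤ C ∫_0^∞ ‖∇_x u(·,t)‖_{L^p}^p / t^{sp−p+1} dt`
with `C = C(d) > 0`. -/
theorem poisson_integral_translate_estimate (d : ℕ) :
    ∃ C : ℝ, 0 < C ∧
      ∀ (s p : ℝ), s ∈ Set.Ioo (0 : ℝ) 1 → 1 < p →
        ∀ f : Ed d → ℝ, MemLp f (ENNReal.ofReal p) volume →
          (∫⁻ y : Ed d, ∫⁻ x : Ed d,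
              ENNReal.ofReal
                (|poissonIntS d f (x + y) ‖y‖ - poissonIntS d f x ‖y‖| ^ p /
                  ‖y‖ ^ ((d : ℝ) + s * p))) ≤
            ENNReal.ofReal C *
              ∫⁻ t in Set.Ioi (0 : ℝ),
                (eLpNorm (fun x => fderiv ℝ (fun z => poissonIntS d f z t) x)
                    (ENNReal.ofReal p) volume) ^ p *
                  ENNReal.ofReal (1 / t ^ (s * p - p + 1)) := by
  obtain ⟨C, hC, h⟩ := poisson_integral_translate_estimate_general d
  exact ⟨C, hC, fun s p _ hp f hf ↦ h s p hp.le f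
    (integrable_one_add_norm_sq_rpow_smul_of_memLp (ENNReal.one_le_ofReal.2 hp.le) hf)⟩
end
end

section
/- For every t > 0 the Poisson-type matrix kernel satisfies ∫_{ℝ^d} ℙ_t(x) dx = I_{d+1}, where the integral is taken entrywise and I_{d+1} is the (d+1)×(d+1) identity matrix; equivalently, for every pair of indices j, k ∈ {1, …, d+1}, ∫_{ℝ^d} 𝔭_t^{jk}(x) dx = δ_{jk}. -/
open MeasureTheory Filter Set
open scoped ENNReal NNReal Topology

noncomputable section

/-- The vector `(x, t) ∈ ℝ^{d+1}`. -/
def snocVec (d : ℕ) (x : Ed d) (t : ℝ) : Fin (d + 1) → ℝ := Fin.snoc (fun i => x i) t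

/-- The entries `𝔭_t^{jk}(x)` of the Poisson-type matrix kernel `ℙ_t`. -/
def pEntry (d : ℕ) (t : ℝ) (j k : Fin (d + 1)) (x : Ed d) : ℝ :=
  (2 * ((d : ℝ) + 1) / sphereVol d) * t * snocVec d x t j *
    snocVec d x t k / (‖x‖ ^ 2 + t ^ 2) ^ (((d : ℝ) + 3) / 2)

/-!
Writing `(‖x‖² + t²)^(-s)` as `Γ(s)⁻¹ ∫₀^∞ u^(s-1) e^(-u(‖x‖² + t²)) du` turns moments of this
weight into Gaussian moments. The covariance of the Gaussian follows from integration by parts,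
since `∂_w e^(-b‖x‖²) = -2b ⟪w, x⟫ e^(-b‖x‖²)`. For `s = (d + 3) / 2`, the zeroth moment times `t²`
carries the factor `Γ(3/2)` and the second moments carry `Γ(1/2) / 2`: these agree, so all diagonal
entries of the kernel have the same integral. The first moments vanish by oddness.

Integrating by parts directly against the weight fails at this exponent: for `v ≠ 0` the function
`⟪v, x⟫ (‖x‖² + t²)^(-(d+1)/2)` is not integrable on `ℝ^d`.
-/

section Subordination

variable {X E : Type*} [MeasurableSpace X] {μ : Measure X} [NormedAddCommGroup E] [NormedSpace ℝ E]
  {φ : X → ℝ} {h : X → E} {s : ℝ}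

lemma integrableOn_rpow_mul_exp_neg_mul_Ioi {r : ℝ} (hs : 0 < s) (hr : 0 < r) :
    IntegrableOn (fun u : ℝ => u ^ (s - 1) * Real.exp (-(r * u))) (Ioi 0) := by
  refine Integrable.of_integral_ne_zero ?_
  rw [Real.integral_rpow_mul_exp_neg_mul_Ioi hs hr]
  exact (mul_pos (Real.rpow_pos_of_pos (by positivity) _) (Real.Gamma_pos_of_pos hs)).ne'

lemma integrable_prod_rpow_mul_exp_neg_mul_smul (hs : 0 < s) (hφ : Measurable φ)
    (hφ0 : ∀ x, 0 < φ x) (hh : AEStronglyMeasurable h μ)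
    (hφh : Integrable (fun x => φ x ^ (-s) • h x) μ) :
    Integrable (fun p : X × ℝ => (p.2 ^ (s - 1) * Real.exp (-(φ p.1 * p.2))) • h p.1)
      (μ.prod (volume.restrict (Ioi 0))) := by
  have hmeas : AEStronglyMeasurable
      (fun p : X × ℝ => (p.2 ^ (s - 1) * Real.exp (-(φ p.1 * p.2))) • h p.1)
      (μ.prod (volume.restrict (Ioi 0))) :=
    (show Measurable fun p : X × ℝ => p.2 ^ (s - 1) * Real.exp (-(φ p.1 * p.2)) by
      fun_prop).aestronglyMeasurable.smul hh.comp_fst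
  have hnorm (x : X) : ∫ u in Ioi 0, ‖(u ^ (s - 1) * Real.exp (-(φ x * u))) • h x‖ =
      Real.Gamma s * ‖φ x ^ (-s) • h x‖ := by
    have hpos : ∀ u ∈ Ioi (0 : ℝ), ‖(u ^ (s - 1) * Real.exp (-(φ x * u))) • h x‖ =
        u ^ (s - 1) * Real.exp (-(φ x * u)) * ‖h x‖ := fun u hu => by
      have hu : 0 < u := hu
      rw [norm_smul, Real.norm_of_nonneg (by positivity)]
    rw [setIntegral_congr_fun measurableSet_Ioi hpos, integral_mul_const,
      Real.integral_rpow_mul_exp_neg_mul_Ioi hs (hφ0 x), norm_smul,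
      Real.norm_of_nonneg (Real.rpow_nonneg (hφ0 x).le _), one_div, ← Real.rpow_neg_eq_inv_rpow]
    ring
  refine (integrable_prod_iff hmeas).2 ⟨Eventually.of_forall fun x => ?_, ?_⟩
  · exact Integrable.smul_const (integrableOn_rpow_mul_exp_neg_mul_Ioi hs (hφ0 x)) (h x)
  · simpa only [hnorm] using hφh.norm.const_mul _

variable [SFinite μ] [CompleteSpace E]

theorem integral_rpow_neg_smul_eq_inv_Gamma_smul_integral_Ioi (hs : 0 < s) (hφ : Measurable φ)
    (hφ0 : ∀ x, 0 < φ x) (hh : AEStronglyMeasurable h μ)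
    (hφh : Integrable (fun x => φ x ^ (-s) • h x) μ) :
    ∫ x, φ x ^ (-s) • h x ∂μ =
      (Real.Gamma s)⁻¹ • ∫ u in Ioi 0, u ^ (s - 1) • ∫ x, Real.exp (-(φ x * u)) • h x ∂μ := by
  have hGamma (x : X) : ∫ u in Ioi 0, (u ^ (s - 1) * Real.exp (-(φ x * u))) • h x =
      Real.Gamma s • φ x ^ (-s) • h x := by
    rw [integral_smul_const, Real.integral_rpow_mul_exp_neg_mul_Ioi hs (hφ0 x), one_div,
      ← Real.rpow_neg_eq_inv_rpow, mul_comm, mul_smul]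
  have hswap := integral_integral_swap
    (f := fun x u => (u ^ (s - 1) * Real.exp (-(φ x * u))) • h x)
    (integrable_prod_rpow_mul_exp_neg_mul_smul hs hφ hφ0 hh hφh)
  simp only [hGamma, integral_smul] at hswap
  simp only [mul_smul, integral_smul] at hswap
  rw [← hswap, inv_smul_smul₀ (Real.Gamma_pos_of_pos hs).ne']

theorem integral_add_rpow_neg_smul_of_integral_exp_neg_smul {a β : ℝ} {m : E} (hs : 0 < s)
    (hβ : β < s) (ha : 0 < a) (hφ : Measurable φ) (hφ0 : ∀ x, 0 ≤ φ x)
    (hh : AEStronglyMeasurable h μ) (hφh : Integrable (fun x => (φ x + a) ^ (-s) • h x) μ)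
    (hexp : ∀ u > 0, ∫ x, Real.exp (-u * φ x) • h x ∂μ = u ^ (-β) • m) :
    ∫ x, (φ x + a) ^ (-s) • h x ∂μ =
      (Real.Gamma (s - β) / Real.Gamma s * a ^ (β - s)) • m := by
  have hinner : ∀ u ∈ Ioi (0 : ℝ),
      u ^ (s - 1) • ∫ x, Real.exp (-((φ x + a) * u)) • h x ∂μ =
        (u ^ (s - β - 1) * Real.exp (-(a * u))) • m := fun u hu => by
    have hsplit (x : X) : Real.exp (-((φ x + a) * u)) • h x =
        Real.exp (-(a * u)) • Real.exp (-u * φ x) • h x := by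
      rw [smul_smul, ← Real.exp_add]
      ring_nf
    simp only [hsplit, integral_smul, hexp u hu]
    rw [show s - β - 1 = (s - 1) + -β by ring, Real.rpow_add hu, smul_smul, smul_smul]
    ring_nf
  rw [integral_rpow_neg_smul_eq_inv_Gamma_smul_integral_Ioi hs (hφ.add_const a)
      (fun x => add_pos_of_nonneg_of_pos (hφ0 x) ha) hh hφh,
    setIntegral_congr_fun measurableSet_Ioi hinner, integral_smul_const,
    Real.integral_rpow_mul_exp_neg_mul_Ioi (sub_pos.2 hβ) ha, smul_smul, one_div,
    ← Real.rpow_neg_eq_inv_rpow, neg_sub]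
  ring_nf

end Subordination

lemma integral_eq_zero_of_odd {G E : Type*} [MeasurableSpace G] [AddGroup G] [MeasurableNeg G]
    {μ : Measure G} [μ.IsNegInvariant] [NormedAddCommGroup E] [NormedSpace ℝ E] {f : G → E}
    (hf : f.Odd) : ∫ x, f x ∂μ = 0 := by
  have hneg := integral_neg_eq_self f μ
  simp only [hf _, integral_neg] at hneg
  have : IsAddTorsionFree E := .of_isTorsionFree ℝ E
  exact self_eq_neg.1 hneg.symm

lemma integrable_sq_norm_add_rpow_neg {E : Type*} [NormedAddCommGroup E] [NormedSpace ℝ E]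
    [FiniteDimensional ℝ E] [MeasurableSpace E] [BorelSpace E] {μ : Measure E}
    [μ.IsAddHaarMeasure] {a s : ℝ} (ha : 0 < a) (hs : (Module.finrank ℝ E : ℝ) / 2 < s) :
    Integrable (fun x : E => (‖x‖ ^ 2 + a) ^ (-s)) μ := by
  have hs0 : 0 < s := lt_of_le_of_lt (by positivity) hs
  have hc : 0 < min 1 a := lt_min one_pos ha
  have hbase := integrable_rpow_neg_one_add_norm_sq (E := E) (μ := μ) (r := 2 * s)
    (by linarith)
  refine (hbase.const_mul (min 1 a ^ (-s))).mono'
    (Measurable.aestronglyMeasurable (by fun_prop)) (Eventually.of_forall fun x => ?_)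
  have hle : min 1 a * (1 + ‖x‖ ^ 2) ≤ ‖x‖ ^ 2 + a := by
    nlinarith [min_le_left 1 a, min_le_right 1 a, sq_nonneg ‖x‖]
  rw [Real.norm_of_nonneg (by positivity), show -(2 * s) / 2 = -s by ring,
    ← Real.mul_rpow hc.le (by positivity)]
  exact Real.rpow_le_rpow_of_nonpos (by positivity) hle (by linarith)

section InnerProductSpace

open Module
open scoped RealInnerProductSpace Real

variable {V : Type*} [NormedAddCommGroup V] [InnerProductSpace ℝ V]

lemma hasFDerivAt_exp_neg_mul_sq_norm (b : ℝ) (x : V) :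
    HasFDerivAt (fun x : V => Real.exp (-b * ‖x‖ ^ 2))
      ((-2 * b * Real.exp (-b * ‖x‖ ^ 2)) • innerSL ℝ x) x := by
  convert! ((hasStrictFDerivAt_norm_sq x).hasFDerivAt.const_mul (-b)).exp using 1
  ext y
  simp only [smul_apply, coe_innerSL_apply, smul_eq_mul, nsmul_eq_mul, Nat.cast_ofNat]
  ring

lemma abs_inner_mul_inner_le (v w x : V) : |⟪v, x⟫ * ⟪w, x⟫| ≤ ‖v‖ * ‖w‖ * ‖x‖ ^ 2 := by
  rw [abs_mul, show ‖v‖ * ‖w‖ * ‖x‖ ^ 2 = (‖v‖ * ‖x‖) * (‖w‖ * ‖x‖) by ring]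
  gcongr <;> exact abs_real_inner_le_norm _ _

variable [FiniteDimensional ℝ V] [MeasurableSpace V] [BorelSpace V] {a b s : ℝ}

lemma integrable_exp_neg_mul_sq_norm (hb : 0 < b) :
    Integrable fun x : V => Real.exp (-b * ‖x‖ ^ 2) := by
  refine Integrable.of_integral_ne_zero ?_
  rw [GaussianFourier.integral_rexp_neg_mul_sq_norm hb]
  positivity

lemma integrable_norm_pow_mul_exp_neg_mul_sq_norm (hb : 0 < b) (k : ℕ) :
    Integrable fun x : V => ‖x‖ ^ k * Real.exp (-b * ‖x‖ ^ 2) := by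
  have hbound (x : V) : ‖x‖ ^ k * Real.exp (-b * ‖x‖ ^ 2) ≤
      (1 + k.factorial * (2 / b) ^ k) * Real.exp (-(b / 2) * ‖x‖ ^ 2) := by
    set E := Real.exp (b / 2 * ‖x‖ ^ 2)
    have hE : 1 ≤ E := Real.one_le_exp (by positivity)
    have hpow : (‖x‖ ^ k) ^ 2 ≤ k.factorial * (2 / b) ^ k * E := by
      have := Real.pow_div_factorial_le_exp (x := b / 2 * ‖x‖ ^ 2) (by positivity) k
      rw [div_le_iff₀ (by positivity)] at this
      calc (‖x‖ ^ k) ^ 2 = (2 / b) ^ k * (b / 2 * ‖x‖ ^ 2) ^ k := by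
            rw [← mul_pow, ← pow_mul, mul_comm k, pow_mul]; congr 1; field_simp
        _ ≤ (2 / b) ^ k * (E * k.factorial) := by gcongr
        _ = _ := by ring
    have hle : ‖x‖ ^ k ≤ (1 + k.factorial * (2 / b) ^ k) * E :=
      calc ‖x‖ ^ k ≤ 1 + (‖x‖ ^ k) ^ 2 := by nlinarith [sq_nonneg (‖x‖ ^ k - 1)]
        _ ≤ E + k.factorial * (2 / b) ^ k * E := add_le_add hE hpow
        _ = _ := by ring
    calc ‖x‖ ^ k * Real.exp (-b * ‖x‖ ^ 2)
        ≤ (1 + k.factorial * (2 / b) ^ k) * E * Real.exp (-b * ‖x‖ ^ 2) := by gcongr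
      _ = _ := by rw [mul_assoc, ← Real.exp_add]; ring_nf
  refine ((integrable_exp_neg_mul_sq_norm (half_pos hb)).const_mul
    (1 + k.factorial * (2 / b) ^ k)).mono' (by fun_prop) (Eventually.of_forall fun x => ?_)
  rw [Real.norm_of_nonneg (by positivity)]
  exact hbound x

lemma integrable_inner_mul_exp_neg_mul_sq_norm (hb : 0 < b) (v : V) :
    Integrable fun x : V => ⟪v, x⟫ * Real.exp (-b * ‖x‖ ^ 2) := by
  refine ((integrable_norm_pow_mul_exp_neg_mul_sq_norm hb 1).const_mul ‖v‖).mono'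
    (by fun_prop) (Eventually.of_forall fun x => ?_)
  rw [norm_mul, Real.norm_of_nonneg (Real.exp_pos _).le, pow_one, ← mul_assoc]
  gcongr
  exact norm_inner_le_norm v x

lemma integrable_inner_mul_inner_mul_exp_neg_mul_sq_norm (hb : 0 < b) (v w : V) :
    Integrable fun x : V => ⟪v, x⟫ * ⟪w, x⟫ * Real.exp (-b * ‖x‖ ^ 2) := by
  refine ((integrable_norm_pow_mul_exp_neg_mul_sq_norm hb 2).const_mul (‖v‖ * ‖w‖)).mono'
    (by fun_prop) (Eventually.of_forall fun x => ?_)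
  rw [norm_mul, Real.norm_of_nonneg (Real.exp_pos _).le, ← mul_assoc]
  gcongr
  exact abs_inner_mul_inner_le v w x

theorem integral_inner_mul_inner_mul_exp_neg_mul_sq_norm (hb : 0 < b) (v w : V) :
    ∫ x : V, ⟪v, x⟫ * ⟪w, x⟫ * Real.exp (-b * ‖x‖ ^ 2) =
      ⟪v, w⟫ / (2 * b) * (π / b) ^ (finrank ℝ V / 2 : ℝ) := by
  have hderiv (x : V) : fderiv ℝ (fun x : V => Real.exp (-b * ‖x‖ ^ 2)) x w =
      -2 * b * (⟪w, x⟫ * Real.exp (-b * ‖x‖ ^ 2)) := by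
    rw [(hasFDerivAt_exp_neg_mul_sq_norm b x).fderiv]
    simp only [smul_apply, coe_innerSL_apply, smul_eq_mul, real_inner_comm x w]
    ring
  have hderiv_inner (x : V) : fderiv ℝ (fun x : V => ⟪v, x⟫) x w = ⟪v, w⟫ :=
    DFunLike.congr_fun (innerSL ℝ v).hasFDerivAt.fderiv w
  have hmul (x : V) : ⟪v, x⟫ * (-2 * b * (⟪w, x⟫ * Real.exp (-b * ‖x‖ ^ 2))) =
      -2 * b * (⟪v, x⟫ * ⟪w, x⟫ * Real.exp (-b * ‖x‖ ^ 2)) := by ring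
  have hparts := integral_mul_fderiv_eq_neg_fderiv_mul_of_integrable (μ := volume) (v := w)
    (f := fun x : V => ⟪v, x⟫) (g := fun x : V => Real.exp (-b * ‖x‖ ^ 2))
    (by simpa only [hderiv_inner] using (integrable_exp_neg_mul_sq_norm hb).const_mul ⟪v, w⟫)
    (by simpa only [hderiv, hmul] using
      (integrable_inner_mul_inner_mul_exp_neg_mul_sq_norm hb v w).const_mul (-2 * b))
    (integrable_inner_mul_exp_neg_mul_sq_norm hb v)
    (fun x _ => (innerSL ℝ v).differentiableAt)
    (fun x _ => (hasFDerivAt_exp_neg_mul_sq_norm b x).differentiableAt)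
  simp only [hderiv, hderiv_inner, hmul, integral_const_mul,
    GaussianFourier.integral_rexp_neg_mul_sq_norm hb] at hparts
  rw [div_mul_eq_mul_div, eq_div_iff (by positivity)]
  linarith

lemma integrable_sq_norm_add_rpow_neg_mul_inner_mul_inner (ha : 0 < a)
    (hs : (finrank ℝ V : ℝ) / 2 + 1 < s) (v w : V) :
    Integrable fun x : V => (‖x‖ ^ 2 + a) ^ (-s) * (⟪v, x⟫ * ⟪w, x⟫) := by
  refine ((integrable_sq_norm_add_rpow_neg (E := V) ha (lt_sub_iff_add_lt.2 hs)).const_mul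
    (‖v‖ * ‖w‖)).mono' (Measurable.aestronglyMeasurable (by fun_prop))
    (Eventually.of_forall fun x => ?_)
  have hx : 0 < ‖x‖ ^ 2 + a := by positivity
  rw [norm_mul, Real.norm_of_nonneg (by positivity)]
  calc (‖x‖ ^ 2 + a) ^ (-s) * |⟪v, x⟫ * ⟪w, x⟫|
      ≤ (‖x‖ ^ 2 + a) ^ (-s) * (‖v‖ * ‖w‖ * (‖x‖ ^ 2 + a)) := by
        gcongr
        exact (abs_inner_mul_inner_le v w x).trans (by gcongr; linarith)
    _ = ‖v‖ * ‖w‖ * (‖x‖ ^ 2 + a) ^ (-(s - 1)) := by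
        rw [show -(s - 1) = -s + 1 by ring, Real.rpow_add_one hx.ne']
        ring

theorem integral_sq_norm_add_rpow_neg (ha : 0 < a) (hs : (finrank ℝ V : ℝ) / 2 < s) :
    ∫ x : V, (‖x‖ ^ 2 + a) ^ (-s) =
      Real.Gamma (s - finrank ℝ V / 2) / Real.Gamma s * a ^ (finrank ℝ V / 2 - s) *
        π ^ (finrank ℝ V / 2 : ℝ) := by
  have hs0 : 0 < s := lt_of_le_of_lt (by positivity) hs
  have hexp : ∀ u > 0, ∫ x : V, Real.exp (-u * ‖x‖ ^ 2) • (1 : ℝ) =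
      u ^ (-(finrank ℝ V / 2 : ℝ)) • π ^ (finrank ℝ V / 2 : ℝ) := fun u hu => by
    simp only [smul_eq_mul, mul_one]
    rw [GaussianFourier.integral_rexp_neg_mul_sq_norm hu, Real.div_rpow Real.pi_pos.le hu.le,
      Real.rpow_neg hu.le]
    ring
  simpa using integral_add_rpow_neg_smul_of_integral_exp_neg_smul hs0 hs ha (by fun_prop)
    (fun x => sq_nonneg ‖x‖) aestronglyMeasurable_const
    (by simpa using integrable_sq_norm_add_rpow_neg ha hs) hexp

theorem integral_sq_norm_add_rpow_neg_mul_inner_mul_inner (ha : 0 < a)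
    (hs : (finrank ℝ V : ℝ) / 2 + 1 < s) (v w : V) :
    ∫ x : V, (‖x‖ ^ 2 + a) ^ (-s) * (⟪v, x⟫ * ⟪w, x⟫) =
      Real.Gamma (s - (finrank ℝ V / 2 + 1)) / Real.Gamma s * a ^ (finrank ℝ V / 2 + 1 - s) *
        (⟪v, w⟫ / 2 * π ^ (finrank ℝ V / 2 : ℝ)) := by
  have hs0 : 0 < s := lt_of_le_of_lt (by positivity) hs
  have hexp : ∀ u > 0, ∫ x : V, Real.exp (-u * ‖x‖ ^ 2) • (⟪v, x⟫ * ⟪w, x⟫) =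
      u ^ (-(finrank ℝ V / 2 + 1 : ℝ)) • (⟪v, w⟫ / 2 * π ^ (finrank ℝ V / 2 : ℝ)) :=
    fun u hu => by
      simp only [smul_eq_mul, mul_comm (Real.exp _)]
      rw [integral_inner_mul_inner_mul_exp_neg_mul_sq_norm hu,
        Real.div_rpow Real.pi_pos.le hu.le, Real.rpow_neg hu.le, Real.rpow_add_one hu.ne']
      field_simp
  exact integral_add_rpow_neg_smul_of_integral_exp_neg_smul hs0 hs ha (by fun_prop)
    (fun x => sq_nonneg ‖x‖) (by fun_prop)
    (integrable_sq_norm_add_rpow_neg_mul_inner_mul_inner ha hs v w) hexp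

end InnerProductSpace

section Kernel

open scoped Real

variable {d : ℕ}

lemma sphereVol_eq (d : ℕ) :
    sphereVol d = (d + 1) * π ^ ((d + 1 : ℝ) / 2) / Real.Gamma ((d + 3 : ℝ) / 2) := by
  have hpow : √π ^ (d + 1) = π ^ ((d + 1 : ℝ) / 2) := by
    rw [Real.sqrt_eq_rpow, ← Real.rpow_mul_natCast Real.pi_pos.le]
    push_cast
    ring_nf
  have hdim : ((d + 1 : ℕ) : ℝ) / 2 + 1 = (d + 3) / 2 := by push_cast; ring
  rw [sphereVol, EuclideanSpace.volume_ball, Fintype.card_fin, hdim, hpow, ENNReal.ofReal_one,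
    one_pow, one_mul, ENNReal.toReal_ofReal (by positivity), mul_div_assoc]

@[simp]
lemma snocVec_last (x : Ed d) (t : ℝ) : snocVec d x t (Fin.last d) = t := by simp [snocVec]

@[simp]
lemma snocVec_castSucc (x : Ed d) (t : ℝ) (i : Fin d) : snocVec d x t i.castSucc = x i := by
  simp [snocVec]

lemma pEntry_comm (t : ℝ) (j k : Fin (d + 1)) (x : Ed d) :
    pEntry d t j k x = pEntry d t k j x := by
  simp only [pEntry]
  ring

lemma pEntry_eq (t : ℝ) (j k : Fin (d + 1)) (x : Ed d) :
    pEntry d t j k x =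
      2 * Real.Gamma ((d + 3) / 2) / (√π * π ^ (d / 2 : ℝ)) * t *
        ((‖x‖ ^ 2 + t ^ 2) ^ (-((d + 3 : ℝ) / 2)) * (snocVec d x t j * snocVec d x t k)) := by
  have hpi : π ^ ((d + 1 : ℝ) / 2) = √π * π ^ (d / 2 : ℝ) := by
    rw [Real.sqrt_eq_rpow, ← Real.rpow_add Real.pi_pos]
    ring_nf
  rw [pEntry, sphereVol_eq, hpi, Real.rpow_neg (by positivity)]
  field_simp

lemma integral_pEntry_last_last {t : ℝ} (ht : 0 < t) :
    ∫ x, pEntry d t (Fin.last d) (Fin.last d) x = 1 := by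
  have hG : Real.Gamma ((d + 3) / 2 - d / 2) = 1 / 2 * √π := by
    rw [show ((d : ℝ) + 3) / 2 - d / 2 = 1 / 2 + 1 by ring, Real.Gamma_add_one (by norm_num),
      Real.Gamma_one_half_eq]
  have htpow : (t ^ 2) ^ ((d : ℝ) / 2 - (d + 3) / 2) = (t ^ 3)⁻¹ := by
    rw [← Real.rpow_natCast_mul ht.le, ← Real.rpow_natCast, ← Real.rpow_neg ht.le]
    push_cast
    ring_nf
  simp only [pEntry_eq, snocVec_last, integral_const_mul, integral_mul_const]
  rw [integral_sq_norm_add_rpow_neg (by positivity) (by rw [finrank_euclideanSpace_fin]; linarith),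
    finrank_euclideanSpace_fin, hG, htpow]
  field_simp

lemma integral_pEntry_castSucc_last (t : ℝ) (i : Fin d) :
    ∫ x, pEntry d t i.castSucc (Fin.last d) x = 0 :=
  integral_eq_zero_of_odd fun x => by simp [pEntry, neg_div]

lemma integral_pEntry_castSucc_castSucc {t : ℝ} (ht : 0 < t) (i l : Fin d) :
    ∫ x, pEntry d t i.castSucc l.castSucc x = if i = l then 1 else 0 := by
  have hG : Real.Gamma ((d + 3) / 2 - (d / 2 + 1)) = √π := by
    rw [show ((d : ℝ) + 3) / 2 - (d / 2 + 1) = 1 / 2 by ring, Real.Gamma_one_half_eq]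
  have htpow : (t ^ 2) ^ ((d : ℝ) / 2 + 1 - (d + 3) / 2) = t⁻¹ := by
    rw [← Real.rpow_natCast_mul ht.le, ← Real.rpow_neg_one]
    push_cast
    ring_nf
  have hmoment := integral_sq_norm_add_rpow_neg_mul_inner_mul_inner (sq_pos_of_pos ht)
    (s := (d + 3) / 2) (by rw [finrank_euclideanSpace_fin]; linarith)
    (EuclideanSpace.single i (1 : ℝ)) (EuclideanSpace.single l 1)
  simp only [EuclideanSpace.inner_single_left, map_one, one_mul, finrank_euclideanSpace_fin,
    PiLp.single_apply] at hmoment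
  simp only [pEntry_eq, snocVec_castSucc, integral_const_mul]
  rw [hmoment, hG, htpow]
  field_simp

end Kernel

/-- For every `t > 0`, `∫_{ℝ^d} ℙ_t(x) dx = I_{d+1}` entrywise: for all indices `j, k`,
`∫_{ℝ^d} 𝔭_t^{jk}(x) dx = δ_{jk}`. -/
theorem pKernel_integral_eq_identity (d : ℕ) (t : ℝ) (ht : 0 < t) (j k : Fin (d + 1)) :
    (∫ x : Ed d, pEntry d t j k x) = if j = k then (1 : ℝ) else 0 := by
  induction j using Fin.lastCases with
  | last =>
    induction k using Fin.lastCases with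
    | last => simpa using integral_pEntry_last_last ht
    | cast l =>
      simpa only [pEntry_comm t (Fin.last d), (Fin.castSucc_ne_last l).symm, if_false] using
        integral_pEntry_castSucc_last t l
  | cast i =>
    induction k using Fin.lastCases with
    | last => simpa using integral_pEntry_castSucc_last t i
    | cast l => simpa using integral_pEntry_castSucc_castSucc ht i l
end
end

section
/- Fractional Poincaré–Korn inequality: Let s ∈ (0,1), p ∈ (1,∞), and let B ⊂ ℝ^d be a ball. Then there exists a constant C = C(p,s,d,B) > 0 such that for every vector field f ∈ L^p(ℝ^d; ℝ^d) with [f]_{W^{s,p}(ℝ^d)} < ∞ and support contained in B, ‖f‖_{L^p(ℝ^d)}^p ≤ C ∫_{ℝ^d} ∫_{ℝ^d} |((f(x) − f(y)) · (x − y)/|x − y|)|^p / |x − y|^{d+sp} dx dy. -/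
/-!
The far-field interactions alone control `‖f‖_p`. If `f x ≠ 0`, then `x ∈ B(x₀, r)`, and every
point `y` at distance less than `r` from `x + 3r f(x) / |f(x)|` lies outside `B(x₀, r)`, so
`f y = 0`; moreover `y - x` makes a small angle with `f x`, so the projected difference at `(x, y)`
is at least `|f(x)| / 2`. Since `2r < |y - x| < 4r`, the kernel is bounded below there, and
integrating first over these `y` and then over `x` gives the inequality.
-/

open MeasureTheory Filter Set
open scoped ENNReal NNReal Topology

noncomputable section

/-- The `p`-th power of the projected Gagliardo seminorm `[f]_{𝒳^s_p(Ω)}^p`. -/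
def projGagP (d : ℕ) (s p : ℝ) (Ω : Set (Ed d)) (f : Ed d → Ed d) : ℝ≥0∞ :=
  ∫⁻ x in Ω, ∫⁻ y in Ω,
    ENNReal.ofReal ((|(inner ℝ (f y - f x) (y - x) : ℝ)| / ‖y - x‖) ^ p /
      ‖y - x‖ ^ ((d : ℝ) + s * p))

/-- The projected Gagliardo seminorm `[f]_{𝒳^s_p(Ω)}`. -/
def projSem (d : ℕ) (s p : ℝ) (Ω : Set (Ed d)) (f : Ed d → Ed d) : ℝ≥0∞ :=
  projGagP d s p Ω f ^ (1 / p)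

/-- The `p`-th power of the Gagliardo seminorm `[f]_{W^{s,p}(Ω)}^p`. -/
def gagP (d : ℕ) (s p : ℝ) (Ω : Set (Ed d)) (f : Ed d → Ed d) : ℝ≥0∞ :=
  ∫⁻ x in Ω, ∫⁻ y in Ω,
    ENNReal.ofReal (‖f y - f x‖ ^ p / ‖y - x‖ ^ ((d : ℝ) + s * p))

/-- The Gagliardo seminorm `[f]_{W^{s,p}(Ω)}`. -/
def gagSem (d : ℕ) (s p : ℝ) (Ω : Set (Ed d)) (f : Ed d → Ed d) : ℝ≥0∞ :=
  gagP d s p Ω f ^ (1 / p)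

lemma norm_mem_Ioo_of_norm_sub_lt {E : Type*} [SeminormedAddCommGroup E] {w z : E} {r : ℝ}
    (hw : ‖w‖ = 3 * r) (hz : ‖z - w‖ < r) : ‖z‖ ∈ Ioo (2 * r) (4 * r) := by
  have lower : ‖w‖ ≤ ‖z‖ + ‖z - w‖ := norm_le_norm_add_norm_sub z w
  have upper : ‖z‖ ≤ ‖w‖ + ‖z - w‖ := norm_le_norm_add_norm_sub' z w
  constructor <;> linarith

lemma exists_sameRay_norm_eq {E : Type*} [NormedAddCommGroup E] [NormedSpace ℝ E] {v : E}
    (hv : v ≠ 0) {R : ℝ} (hR : 0 ≤ R) : ∃ w : E, SameRay ℝ v w ∧ ‖w‖ = R := by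
  refine ⟨(R / ‖v‖) • v, SameRay.sameRay_nonneg_smul_right v (by positivity), ?_⟩
  rw [norm_smul, Real.norm_of_nonneg (by positivity), div_mul_cancel₀ R (norm_ne_zero_iff.2 hv)]

section ProjectedEnergy

variable {E : Type*} [NormedAddCommGroup E] [InnerProductSpace ℝ E]

lemma norm_mul_norm_div_two_le_inner_of_sameRay {v w z : E} (hvw : SameRay ℝ v w)
    (hz : ‖z - w‖ ≤ ‖w‖ / 3) : ‖v‖ * ‖z‖ / 2 ≤ inner ℝ v z := by
  have norm_z_le : ‖z‖ ≤ 4 / 3 * ‖w‖ := by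
    linarith [norm_le_norm_add_norm_sub' z w]
  have inner_error : -(‖v‖ * (‖w‖ / 3)) ≤ inner ℝ v (z - w) :=
    (abs_le.1 ((abs_real_inner_le_norm v (z - w)).trans (by gcongr))).1
  calc ‖v‖ * ‖z‖ / 2 ≤ ‖v‖ * (4 / 3 * ‖w‖) / 2 := by gcongr
    _ = ‖v‖ * ‖w‖ + -(‖v‖ * (‖w‖ / 3)) := by ring
    _ ≤ inner ℝ v w + inner ℝ v (z - w) := by
      rw [inner_eq_norm_mul_iff_real.2 hvw.norm_smul_eq.symm]
      gcongr
    _ = inner ℝ v z := by rw [← inner_add_right, add_sub_cancel]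

lemma exists_ball_norm_div_two_le_abs_inner_div_norm {x₀ : E} {r : ℝ} {f : E → E}
    (hf : Function.support f ⊆ Metric.ball x₀ r) {x : E} (hx : f x ≠ 0) :
    ∃ a : E, ∀ y ∈ Metric.ball a r, ‖y - x‖ ∈ Ioo (2 * r) (4 * r) ∧
      ‖f x‖ / 2 ≤ |inner ℝ (f y - f x) (y - x)| / ‖y - x‖ := by
  have hxB : x ∈ Metric.ball x₀ r := hf hx
  have hr : 0 < r := Metric.pos_of_mem_ball hxB
  obtain ⟨w, hray, hw⟩ := exists_sameRay_norm_eq hx (R := 3 * r) (by positivity)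
  refine ⟨x + w, fun y hy ↦ ?_⟩
  have near : ‖y - x - w‖ < r := by rwa [sub_sub, ← mem_ball_iff_norm]
  have hyx : ‖y - x‖ ∈ Ioo (2 * r) (4 * r) := norm_mem_Ioo_of_norm_sub_lt hw near
  have hfy : f y = 0 := by
    by_contra hy₀
    linarith [dist_triangle_right y x x₀, Metric.mem_ball.1 (hf hy₀), Metric.mem_ball.1 hxB,
      dist_eq_norm y x, hyx.1]
  refine ⟨hyx, (le_div_iff₀ (by linarith [hyx.1])).2 ?_⟩
  calc ‖f x‖ / 2 * ‖y - x‖ = ‖f x‖ * ‖y - x‖ / 2 := by ring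
    _ ≤ inner ℝ (f x) (y - x) :=
      norm_mul_norm_div_two_le_inner_of_sameRay hray (by linarith)
    _ ≤ |inner ℝ (f x) (y - x)| := le_abs_self _
    _ = |inner ℝ (f y - f x) (y - x)| := by rw [hfy, zero_sub, inner_neg_left, abs_neg]

variable [MeasurableSpace E]

/-- The nonlocal energy of a vector field `f` with radial kernel `K`, in which only the component
of the difference `f y - f x` along `y - x` appears. The kernel `K t = t ^ (-(d + s * p))` gives the
`p`-th power of the projected Gagliardo seminorm. -/
def projEnergy (μ : Measure E) (K : ℝ → ℝ) (p : ℝ) (f : E → E) : ℝ≥0∞ :=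
  ∫⁻ x, ∫⁻ y, ENNReal.ofReal
    ((|inner ℝ (f y - f x) (y - x)| / ‖y - x‖) ^ p * K ‖y - x‖) ∂μ ∂μ

variable [BorelSpace E] {μ : Measure E} {K : ℝ → ℝ} {p c r : ℝ}

lemma ofReal_mul_measure_ball_mul_enorm_rpow_le_lintegral [μ.IsAddLeftInvariant] (hp : 0 < p)
    (hc : 0 ≤ c) (hK : ∀ t ∈ Ioo (2 * r) (4 * r), c ≤ K t) {x₀ : E} {f : E → E}
    (hf : Function.support f ⊆ Metric.ball x₀ r) (x : E) :
    ENNReal.ofReal (c / 2 ^ p) * μ (Metric.ball 0 r) * ‖f x‖ₑ ^ p ≤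
      ∫⁻ y, ENNReal.ofReal
        ((|inner ℝ (f y - f x) (y - x)| / ‖y - x‖) ^ p * K ‖y - x‖) ∂μ := by
  by_cases hx : f x = 0
  · simp [hx, hp]
  obtain ⟨a, ha⟩ := exists_ball_norm_div_two_le_abs_inner_div_norm hf hx
  have ball_translate : μ (Metric.ball 0 r) = μ (Metric.ball a r) := by
    rw [← measure_preimage_add μ a (Metric.ball a r), preimage_add_ball, sub_self]
  calc
    _ = ENNReal.ofReal ((‖f x‖ / 2) ^ p * c) * μ (Metric.ball a r) := by
      rw [Real.div_rpow (norm_nonneg _) zero_le_two, div_mul_comm,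
        ENNReal.ofReal_mul (by positivity), ← ENNReal.ofReal_rpow_of_nonneg (norm_nonneg _) hp.le,
        ofReal_norm, ball_translate, mul_right_comm]
    _ = ∫⁻ _ in Metric.ball a r, ENNReal.ofReal ((‖f x‖ / 2) ^ p * c) ∂μ :=
      (setLIntegral_const _ _).symm
    _ ≤ ∫⁻ y in Metric.ball a r, ENNReal.ofReal
        ((|inner ℝ (f y - f x) (y - x)| / ‖y - x‖) ^ p * K ‖y - x‖) ∂μ := by
      refine setLIntegral_mono' measurableSet_ball fun y hy ↦ ENNReal.ofReal_le_ofReal ?_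
      obtain ⟨hyx, hproj⟩ := ha y hy
      have hKyx : c ≤ K ‖y - x‖ := hK _ hyx
      gcongr
    _ ≤ _ := setLIntegral_le_lintegral _ _

lemma ofReal_mul_measure_ball_mul_eLpNorm_rpow_le_projEnergy [μ.IsAddLeftInvariant]
    (hp : 0 < p) (hc : 0 ≤ c) (hK : ∀ t ∈ Ioo (2 * r) (4 * r), c ≤ K t) {x₀ : E} {f : E → E}
    (hf : Function.support f ⊆ Metric.ball x₀ r) :
    ENNReal.ofReal (c / 2 ^ p) * μ (Metric.ball 0 r) * eLpNorm f (ENNReal.ofReal p) μ ^ p ≤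
      projEnergy μ K p f := by
  have norm_eq : eLpNorm f (ENNReal.ofReal p) μ ^ p = ∫⁻ x, ‖f x‖ₑ ^ p ∂μ := by
    have norm_eq_toNNReal := eLpNorm_nnreal_pow_eq_lintegral (f := f) (μ := μ)
      (Real.toNNReal_pos.2 hp).ne'
    rwa [Real.coe_toNNReal p hp.le] at norm_eq_toNNReal
  rw [norm_eq]
  exact (lintegral_const_mul_le _ _).trans <| lintegral_mono
    (ofReal_mul_measure_ball_mul_enorm_rpow_le_lintegral hp hc hK hf)

theorem fractional_poincare_korn_general [FiniteDimensional ℝ E] [μ.IsAddHaarMeasure]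
    (hp : 0 < p) (hr : 0 < r) (hc : 0 < c) (hK : ∀ t ∈ Ioo (2 * r) (4 * r), c ≤ K t) (x₀ : E) :
    ∃ C : ℝ, 0 < C ∧ ∀ f : E → E, Function.support f ⊆ Metric.ball x₀ r →
      eLpNorm f (ENNReal.ofReal p) μ ^ p ≤ ENNReal.ofReal C * projEnergy μ K p f := by
  set M : ℝ≥0∞ := ENNReal.ofReal (c / 2 ^ p) * μ (Metric.ball 0 r)
  have M_ne_zero : M ≠ 0 :=
    mul_ne_zero (ENNReal.ofReal_pos.2 (by positivity)).ne' (Metric.measure_ball_pos μ 0 hr).ne'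
  have M_ne_top : M ≠ ∞ := ENNReal.mul_ne_top ENNReal.ofReal_ne_top measure_ball_lt_top.ne
  have inv_ne_top : M⁻¹ ≠ ∞ := ENNReal.inv_ne_top.2 M_ne_zero
  refine ⟨M⁻¹.toReal, ENNReal.toReal_pos (ENNReal.inv_ne_zero.2 M_ne_top) inv_ne_top,
    fun f hf ↦ ?_⟩
  rw [ENNReal.ofReal_toReal inv_ne_top, ← ENNReal.mul_le_iff_le_inv M_ne_zero M_ne_top]
  exact ofReal_mul_measure_ball_mul_eLpNorm_rpow_le_projEnergy hp hc.le hK hf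

end ProjectedEnergy

lemma projGagP_univ_eq_projEnergy (d : ℕ) (s p : ℝ) (f : Ed d → Ed d) :
    projGagP d s p univ f = projEnergy volume (fun t ↦ (t ^ ((d : ℝ) + s * p))⁻¹) p f := by
  simp only [projGagP, projEnergy, Measure.restrict_univ, div_eq_mul_inv]

/-- **Fractional Poincaré–Korn inequality.** Let `s ∈ (0,1)`, `p ∈ (1,∞)` and let
`B = B(x₀,r) ⊂ ℝ^d` be a ball. There is `C = C(p,s,d,B) > 0` such that every
`f ∈ W^{s,p}(ℝ^d;ℝ^d)` supported in `B` satisfies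
`‖f‖_{L^p(ℝ^d)}^p ≤ C [f]_{𝒳^s_p(ℝ^d)}^p`. -/
theorem fractional_poincare_korn (d : ℕ) (s p : ℝ) (hs : s ∈ Set.Ioo (0 : ℝ) 1)
    (hp : 1 < p) (x₀ : Ed d) (r : ℝ) (hr : 0 < r) :
    ∃ C : ℝ, 0 < C ∧
      ∀ f : Ed d → Ed d, MemLp f (ENNReal.ofReal p) volume →
        gagP d s p Set.univ f < ∞ →
        Function.support f ⊆ Metric.ball x₀ r →
        eLpNorm f (ENNReal.ofReal p) volume ^ p ≤
          ENNReal.ofReal C * projGagP d s p Set.univ f := by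
  have exponent_nonneg : 0 ≤ (d : ℝ) + s * p :=
    add_nonneg d.cast_nonneg (mul_pos hs.1 (by linarith)).le
  have kernel_lower_bound : ∀ t ∈ Ioo (2 * r) (4 * r),
      ((4 * r) ^ ((d : ℝ) + s * p))⁻¹ ≤ (t ^ ((d : ℝ) + s * p))⁻¹ := by
    rintro t ⟨two_r_lt, lt_four_r⟩
    have : 0 < t := by linarith
    gcongr
  obtain ⟨C, hC, hbound⟩ := fractional_poincare_korn_general (E := Ed d) (μ := volume)
    (zero_lt_one.trans hp) hr (by positivity) kernel_lower_bound x₀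
  exact ⟨C, hC, fun f _ _ hf ↦ projGagP_univ_eq_projEnergy d s p f ▸ hbound f hf⟩
end
end

section
/- Fractional Sobolev embedding with the projected seminorm: Let s ∈ (0,1) and p ∈ (1,∞) be such that sp < d, and set p*_s = dp/(d − sp). Then there exists a constant C = C(d,p,s) > 0 such that for every measurable, compactly supported vector field f : ℝ^d → ℝ^d, ‖f‖_{L^{p*_s}(ℝ^d)}^p ≤ C ∫_{ℝ^d} ∫_{ℝ^d} |((f(x) − f(y)) · (x − y)/|x − y|)|^p / |x − y|^{d+sp} dx dy. -/
open MeasureTheory Filter Set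
open scoped ENNReal NNReal Topology

noncomputable section

/-!
Fix `x` with `f x ≠ 0`. On the ball of radius `ρ` centred at `x + 2ρ f(x)/|f(x)|` the direction
`(y - x)/|y - x|` makes a small angle with `f x`, so wherever `|f y|` is a small fraction of
`|f x|` the projected increment is comparable to `|f x|` itself. Choosing `ρ` so that this ball has
twice the measure of a superlevel set of `|f|` leaves at least half of it where `|f y|` is small,
and therefore
`|f x| ^ p ≤ C |{|f| > |f x| / 6}| ^ (s p / d) F x`, with `F` the inner integral of `[f] ^ p`.
Bounding the superlevel set by Chebyshev's inequality in terms of `M = ‖f‖_q ^ q`, `q = p*_s`, and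
integrating in `x` gives `M ≤ C M ^ (s p / d) [f] ^ p`, and `1 - s p / d = p / q`. Dividing by the
power of `M` requires `M < ∞`, so the argument is run for `min |f| T` and then `T → ∞`.
-/

open Metric Module

section Cone

variable {E : Type*} [NormedAddCommGroup E] [InnerProductSpace ℝ E] {u w : E} {ρ : ℝ}

theorem norm_lt_three_mul_of_mem_ball_smul (hw : w ∈ ball ((2 * ρ / ‖u‖) • u) ρ) :
    ‖w‖ < 3 * ρ := by
  have hρ : 0 < ρ := pos_of_mem_ball hw
  have hcenter : ‖(2 * ρ / ‖u‖) • u‖ ≤ 2 * ρ := by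
    rw [norm_smul, Real.norm_of_nonneg (by positivity), div_mul_comm]
    exact mul_le_of_le_one_left (by positivity) (div_self_le_one _)
  linarith [norm_le_norm_add_norm_sub' w ((2 * ρ / ‖u‖) • u), mem_ball_iff_norm.mp hw]

theorem mul_norm_le_inner_of_mem_ball_smul (hw : w ∈ ball ((2 * ρ / ‖u‖) • u) ρ) :
    ρ * ‖u‖ ≤ inner ℝ u w := by
  set c := (2 * ρ / ‖u‖) • u with hc
  have hcenter : inner ℝ u c = 2 * ρ * ‖u‖ := by
    rw [hc, inner_smul_right, real_inner_self_eq_norm_sq]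
    rcases eq_or_ne ‖u‖ 0 with hu | hu
    · simp [hu]
    · field_simp
  have herror : -(‖u‖ * ρ) ≤ inner ℝ u (w - c) :=
    (neg_le_neg (by gcongr; exact (mem_ball_iff_norm.mp hw).le)).trans
      (neg_le_of_abs_le (abs_real_inner_le_norm u (w - c)))
  rw [inner_sub_right, hcenter] at herror
  linarith

theorem norm_div_three_sub_norm_le_of_mem_ball_smul (b : E)
    (hw : w ∈ ball ((2 * ρ / ‖u‖) • u) ρ) (hw0 : w ≠ 0) :
    ‖u‖ / 3 - ‖b‖ ≤ |inner ℝ (b - u) w| / ‖w‖ := by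
  have hw_lt := norm_lt_three_mul_of_mem_ball_smul hw
  have hinner : ‖u‖ / 3 * ‖w‖ ≤ inner ℝ u w := calc
    ‖u‖ / 3 * ‖w‖ ≤ ‖u‖ / 3 * (3 * ρ) := by gcongr
    _ = ρ * ‖u‖ := by ring
    _ ≤ inner ℝ u w := mul_norm_le_inner_of_mem_ball_smul hw
  rw [le_div_iff₀ (norm_pos_iff.mpr hw0)]
  have hsub : -(inner ℝ b w - inner ℝ u w) ≤ |inner ℝ (b - u) w| := by
    rw [inner_sub_left]
    exact neg_le_abs _
  linarith [real_inner_le_norm b w]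

end Cone

section ProjectedGagliardo

variable {E : Type*} [NormedAddCommGroup E] [InnerProductSpace ℝ E]

/-- The integrand of the `p`-th power of the projected Gagliardo seminorm of a vector field on a
finite-dimensional real inner product space. On the diagonal it is the junk value of `0 / 0`. -/
def projGagliardoKernel (s p : ℝ) (f : E → E) (x y : E) : ℝ≥0∞ :=
  ENNReal.ofReal ((|inner ℝ (f y - f x) (y - x)| / ‖y - x‖) ^ p /
    ‖y - x‖ ^ ((finrank ℝ E : ℝ) + s * p))

/-- The `p`-th power of the projected Gagliardo seminorm of order `s` with respect to a measure
`μ`, as the double integral of `projGagliardoKernel`. -/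
def projGagliardo [MeasurableSpace E] (μ : Measure E) (s p : ℝ) (f : E → E) : ℝ≥0∞ :=
  ∫⁻ x, ∫⁻ y, projGagliardoKernel s p f x y ∂μ ∂μ

theorem projGagP_univ (d : ℕ) (s p : ℝ) (f : Ed d → Ed d) :
    projGagP d s p univ f = projGagliardo volume s p f := by
  simp [projGagP, projGagliardo, projGagliardoKernel]

variable {f : E → E} {s p t ρ : ℝ} {x y : E}

theorem ofReal_le_projGagliardoKernel (hp : 0 ≤ p) (hs : 0 ≤ s) (ht : 0 < t) (hx : t ≤ ‖f x‖)
    (hy : ‖f y‖ ≤ t / 6) (hyx : y ∈ ball (x + (2 * ρ / ‖f x‖) • f x) ρ) :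
    ENNReal.ofReal ((t / 6) ^ p / (3 * ρ) ^ ((finrank ℝ E : ℝ) + s * p)) ≤
      projGagliardoKernel s p f x y := by
  have hcone : y - x ∈ ball ((2 * ρ / ‖f x‖) • f x) ρ := by
    rwa [mem_ball_iff_norm, sub_sub, ← mem_ball_iff_norm]
  have hne : y - x ≠ 0 := by
    rw [sub_ne_zero]
    rintro rfl
    linarith
  have hlt := norm_lt_three_mul_of_mem_ball_smul hcone
  have hincrement : t / 6 ≤ |inner ℝ (f y - f x) (y - x)| / ‖y - x‖ := by
    linarith [norm_div_three_sub_norm_le_of_mem_ball_smul (f y) hcone hne]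
  have : 0 < ‖y - x‖ := norm_pos_iff.mpr hne
  unfold projGagliardoKernel
  gcongr

variable [FiniteDimensional ℝ E] [MeasurableSpace E]

theorem measureReal_unitBall_pos (μ : Measure E) [μ.IsAddHaarMeasure] :
    0 < μ.real (ball (0 : E) 1) :=
  ENNReal.toReal_pos (measure_ball_pos μ _ one_pos).ne' measure_ball_lt_top.ne

variable [BorelSpace E] {μ : Measure E} [μ.IsAddHaarMeasure]

theorem ofReal_mul_measure_ball_le_lintegral_projGagliardoKernel (hp : 0 ≤ p) (hs : 0 ≤ s)
    (hf : AEStronglyMeasurable f μ) (ht : 0 < t) (hx : t ≤ ‖f x‖)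
    (hlevel : μ {y | t / 6 < ‖f y‖} ≤ μ (ball 0 ρ) / 2) :
    ENNReal.ofReal ((t / 6) ^ p / (3 * ρ) ^ ((finrank ℝ E : ℝ) + s * p)) *
      (μ (ball 0 ρ) / 2) ≤ ∫⁻ y, projGagliardoKernel s p f x y ∂μ := by
  set c := ENNReal.ofReal ((t / 6) ^ p / (3 * ρ) ^ ((finrank ℝ E : ℝ) + s * p))
  set A := ball (x + (2 * ρ / ‖f x‖) • f x) ρ
  set L := {y | t / 6 < ‖f y‖}
  have hL : NullMeasurableSet L μ := aestronglyMeasurable_const.nullMeasurableSet_lt hf.norm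
  have hlarge : μ (ball 0 ρ) / 2 ≤ μ (A \ L) := calc
    μ (ball 0 ρ) / 2 = μ A - μ (ball 0 ρ) / 2 := by
      rw [show μ A = μ (ball 0 ρ) from Measure.addHaar_ball_center μ _ ρ,
        ENNReal.sub_half measure_ball_lt_top.ne]
    _ ≤ μ A - μ L := by gcongr
    _ ≤ μ (A \ L) := le_measure_sdiff
  calc c * (μ (ball 0 ρ) / 2) ≤ c * μ (A \ L) := by gcongr
    _ = ∫⁻ _ in A \ L, c ∂μ := (setLIntegral_const _ _).symm
    _ ≤ ∫⁻ y in A \ L, projGagliardoKernel s p f x y ∂μ := by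
      refine lintegral_mono_ae ?_
      filter_upwards [ae_restrict_mem₀ (measurableSet_ball.nullMeasurableSet.diff hL)]
        with y hy
      exact ofReal_le_projGagliardoKernel hp hs ht hx (not_lt.mp hy.2) hy.1
    _ ≤ ∫⁻ y, projGagliardoKernel s p f x y ∂μ := setLIntegral_le_lintegral _ _

theorem addHaar_ball_rpow_inv_finrank (hn : 0 < finrank ℝ E) {V : ℝ} (hV : 0 < V) :
    μ (ball 0 ((V / μ.real (ball 0 1)) ^ (finrank ℝ E : ℝ)⁻¹)) = ENNReal.ofReal V := by
  have hunit := measureReal_unitBall_pos μ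
  rw [Measure.addHaar_ball_of_pos μ _ (by positivity), Real.rpow_inv_natCast_pow (by positivity)
    hn.ne', ← ofReal_measureReal measure_ball_lt_top.ne, ← ENNReal.ofReal_mul (by positivity),
    div_mul_cancel₀ _ hunit.ne']

theorem exists_ofReal_rpow_le_mul_lintegral_projGagliardoKernel (μ : Measure E)
    [μ.IsAddHaarMeasure] (hn : 0 < finrank ℝ E) (hp : 0 ≤ p) (hs : 0 ≤ s) :
    ∃ C : ℝ, 0 < C ∧ ∀ f : E → E, AEStronglyMeasurable f μ → ∀ (x : E) (t V : ℝ),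
      0 < t → t ≤ ‖f x‖ → 0 < V → μ {y | t / 6 < ‖f y‖} ≤ ENNReal.ofReal V →
        ENNReal.ofReal (t ^ p) ≤ ENNReal.ofReal (C * V ^ (s * p / finrank ℝ E)) *
          ∫⁻ y, projGagliardoKernel s p f x y ∂μ := by
  set n : ℝ := (finrank ℝ E : ℝ) with hn_def
  set a := s * p / n with ha
  set b := μ.real (ball (0 : E) 1)
  have hn0 : 0 < n := by positivity
  have hb0 : 0 < b := measureReal_unitBall_pos μ
  refine ⟨6 ^ p * 3 ^ (n + s * p) * (2 / b) ^ (1 + a), by positivity,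
    fun f hf x t V ht hx hV hlevel => ?_⟩
  set ρ := (2 * V / b) ^ n⁻¹ with hρ
  have hball : μ (ball 0 ρ) / 2 = ENNReal.ofReal V := by
    rw [hρ, addHaar_ball_rpow_inv_finrank hn (by positivity), ENNReal.ofReal_mul zero_le_two,
      ENNReal.ofReal_ofNat, mul_comm, ENNReal.mul_div_cancel_right two_ne_zero ENNReal.ofNat_ne_top]
  have hradius : (3 * ρ) ^ (n + s * p) = 3 ^ (n + s * p) * ((2 / b) ^ (1 + a) * V ^ (1 + a)) := by
    rw [Real.mul_rpow (by norm_num) (by positivity), hρ, ← Real.rpow_mul (by positivity),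
      ← Real.mul_rpow (by positivity) hV.le, show n⁻¹ * (n + s * p) = 1 + a by rw [ha]; field_simp,
      div_mul_eq_mul_div]
  have hkernel := ofReal_mul_measure_ball_le_lintegral_projGagliardoKernel hp hs hf ht hx
    (hlevel.trans_eq hball.symm)
  rw [hball, ← hn_def, hradius, ← ENNReal.ofReal_mul (by positivity)] at hkernel
  refine le_trans (le_of_eq ?_) (mul_le_mul_right hkernel _)
  rw [← ENNReal.ofReal_mul (by positivity), Real.div_rpow ht.le (by norm_num),
    Real.rpow_add hV, Real.rpow_one]
  field_simp

end ProjectedGagliardo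

section Truncation

variable {α F : Type*} [MeasurableSpace α] {μ : Measure α} [NormedAddCommGroup F] {f : α → F}
  {q : ℝ}

theorem lintegral_min_enorm_rpow_lt_top (hq : 0 < q) (hf : μ (Function.support f) ≠ ∞) (T : ℝ≥0) :
    ∫⁻ y, min ‖f y‖ₑ T ^ q ∂μ < ∞ := by
  have hsupport : (Function.support fun y => min ‖f y‖ₑ (T : ℝ≥0∞) ^ q) ⊆ Function.support f := by
    intro y hy hfy
    simp [hfy, hq] at hy
  rw [← setLIntegral_eq_of_support_subset hsupport]
  calc ∫⁻ y in Function.support f, min ‖f y‖ₑ T ^ q ∂μ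
      ≤ ∫⁻ _ in Function.support f, (T : ℝ≥0∞) ^ q ∂μ := by
        gcongr
        exact min_le_right _ _
    _ = (T : ℝ≥0∞) ^ q * μ (Function.support f) := setLIntegral_const _ _
    _ < ∞ := ENNReal.mul_lt_top (ENNReal.rpow_lt_top_of_nonneg hq.le ENNReal.coe_ne_top)
        hf.lt_top

theorem lintegral_enorm_rpow_le_of_forall_min_le (hf : AEStronglyMeasurable f μ) (hq : 0 ≤ q)
    {K : ℝ≥0∞} (hK : ∀ T : ℝ≥0, ∫⁻ y, min ‖f y‖ₑ T ^ q ∂μ ≤ K) :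
    ∫⁻ y, ‖f y‖ₑ ^ q ∂μ ≤ K := by
  have hlim : Tendsto (fun k : ℕ => ∫⁻ y, min ‖f y‖ₑ k ^ q ∂μ) atTop
      (𝓝 (∫⁻ y, ‖f y‖ₑ ^ q ∂μ)) := by
    refine lintegral_tendsto_of_tendsto_of_monotone
      (fun k => (hf.enorm.min aemeasurable_const).pow_const q)
      (ae_of_all _ fun y k l hkl => ?_) (ae_of_all _ fun y => ?_)
    · dsimp only
      gcongr
    · simpa using (tendsto_const_nhds.min ENNReal.tendsto_nat_nhds_top).ennrpow_const q
  exact le_of_tendsto' hlim fun k => mod_cast hK k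

theorem measure_lt_norm_le_lintegral_min_div (hf : AEStronglyMeasurable f μ) (hq : 0 ≤ q) {τ : ℝ}
    (hτ : 0 < τ) {T : ℝ≥0} (hτT : τ ≤ T) :
    μ {y | τ < ‖f y‖} ≤ (∫⁻ y, min ‖f y‖ₑ T ^ q ∂μ) / ENNReal.ofReal (τ ^ q) := by
  refine (measure_mono fun y hy => ?_).trans (meas_ge_le_lintegral_div
    ((hf.enorm.min aemeasurable_const).pow_const q)
    (ENNReal.ofReal_pos.mpr (by positivity)).ne' ENNReal.ofReal_ne_top)
  rw [mem_ofPred_eq, ← ENNReal.ofReal_rpow_of_pos hτ]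
  gcongr
  refine le_min ?_ (ENNReal.ofReal_le_of_le_toReal hτT)
  rw [← ofReal_norm]
  exact ENNReal.ofReal_le_ofReal hy.le

end Truncation

theorem rpow_one_sub_le_of_le_mul_rpow {M K : ℝ≥0∞} {a : ℝ} (ha : a < 1)
    (hM : M ≠ ∞) (h : M ≤ K * M ^ a) : M ^ (1 - a) ≤ K := by
  rcases eq_or_ne M 0 with rfl | hM0
  · simp [ha]
  · rw [ENNReal.rpow_sub _ _ hM0 hM, ENNReal.rpow_one]
    exact ENNReal.div_le_of_le_mul h

section SobolevEmbedding

/-- The fractional Sobolev exponent `p*_s = n p / (n - s p)` in dimension `n`. -/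
def fracSobolevExponent (n s p : ℝ) : ℝ := n * p / (n - s * p)

theorem fracSobolevExponent_pos {n s p : ℝ} (hn : 0 < n) (hp : 0 < p) (hsp : s * p < n) :
    0 < fracSobolevExponent n s p :=
  div_pos (mul_pos hn hp) (sub_pos.mpr hsp)

theorem one_sub_div_eq_div_fracSobolevExponent {n s p : ℝ} (hn : n ≠ 0) (hp : p ≠ 0) :
    1 - s * p / n = p / fracSobolevExponent n s p := by
  rw [fracSobolevExponent, div_div_eq_mul_div, one_sub_div hn]
  field_simp

variable {E : Type*} [NormedAddCommGroup E] [InnerProductSpace ℝ E] [FiniteDimensional ℝ E]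
  [MeasurableSpace E] [BorelSpace E] (μ : Measure E) [μ.IsAddHaarMeasure] {s p : ℝ}

theorem exists_ofReal_rpow_fracSobolevExponent_le (hp : 0 < p) (hs : 0 ≤ s)
    (hsp : s * p < finrank ℝ E) {q : ℝ} (hq : q = fracSobolevExponent (finrank ℝ E) s p) :
    ∃ C : ℝ, 0 < C ∧ ∀ f : E → E, AEStronglyMeasurable f μ → ∀ (x : E) (t m : ℝ),
      0 < t → t ≤ ‖f x‖ → 0 < m → μ {y | t / 6 < ‖f y‖} ≤ ENNReal.ofReal (m / (t / 6) ^ q) →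
        ENNReal.ofReal (t ^ q) ≤ ENNReal.ofReal (C * m ^ (s * p / finrank ℝ E)) *
          ∫⁻ y, projGagliardoKernel s p f x y ∂μ := by
  have hn : (0 : ℝ) < finrank ℝ E := (by positivity : 0 ≤ s * p).trans_lt hsp
  obtain ⟨C, hC, hpointwise⟩ := exists_ofReal_rpow_le_mul_lintegral_projGagliardoKernel μ
    (mod_cast hn) hp.le hs
  set a := s * p / finrank ℝ E
  have hexp : q * a + p = q := by
    have hconj := one_sub_div_eq_div_fracSobolevExponent (s := s) hn.ne' hp.ne'
    rw [← hq, eq_div_iff (hq ▸ fracSobolevExponent_pos hn hp hsp).ne'] at hconj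
    linarith
  refine ⟨C * (6 ^ q) ^ a, by positivity, fun f hf x t m ht hx hm hlevel => ?_⟩
  have hrescale : t ^ (q * a) * (C * (m / (t / 6) ^ q) ^ a) = C * (6 ^ q) ^ a * m ^ a := by
    rw [Real.div_rpow ht.le (by norm_num), Real.div_rpow hm.le (by positivity),
      Real.div_rpow (by positivity) (by positivity), ← Real.rpow_mul ht.le]
    field_simp
  calc ENNReal.ofReal (t ^ q) = ENNReal.ofReal (t ^ (q * a)) * ENNReal.ofReal (t ^ p) := by
        rw [← ENNReal.ofReal_mul (by positivity), ← Real.rpow_add ht, hexp]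
    _ ≤ ENNReal.ofReal (t ^ (q * a)) * (ENNReal.ofReal (C * (m / (t / 6) ^ q) ^ a) *
          ∫⁻ y, projGagliardoKernel s p f x y ∂μ) := by
        gcongr
        exact hpointwise f hf x t _ ht hx (by positivity) hlevel
    _ = ENNReal.ofReal (C * (6 ^ q) ^ a * m ^ a) * ∫⁻ y, projGagliardoKernel s p f x y ∂μ := by
        rw [← mul_assoc, ← ENNReal.ofReal_mul (by positivity), hrescale]

theorem exists_min_enorm_rpow_le (hp : 0 < p) (hs : 0 ≤ s) (hsp : s * p < finrank ℝ E) {q : ℝ}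
    (hq : q = fracSobolevExponent (finrank ℝ E) s p) :
    ∃ C : ℝ, 0 < C ∧ ∀ f : E → E, AEStronglyMeasurable f μ → ∀ T : ℝ≥0,
      ∫⁻ y, min ‖f y‖ₑ T ^ q ∂μ ≠ 0 → ∫⁻ y, min ‖f y‖ₑ T ^ q ∂μ ≠ ∞ → ∀ x,
        min ‖f x‖ₑ T ^ q ≤ ENNReal.ofReal C *
          (∫⁻ y, min ‖f y‖ₑ T ^ q ∂μ) ^ (s * p / finrank ℝ E) *
          ∫⁻ y, projGagliardoKernel s p f x y ∂μ := by
  have hq0 : 0 < q :=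
    hq ▸ fracSobolevExponent_pos ((by positivity : 0 ≤ s * p).trans_lt hsp) hp hsp
  obtain ⟨C, hC, hpointwise⟩ := exists_ofReal_rpow_fracSobolevExponent_le μ hp hs hsp hq
  refine ⟨C, hC, fun f hf T hM0 hM x => ?_⟩
  set M := ∫⁻ y, min ‖f y‖ₑ T ^ q ∂μ
  have hmin : min ‖f x‖ₑ T = ENNReal.ofReal (min ‖f x‖ T) := by
    rw [ENNReal.ofReal_min, ofReal_norm, ENNReal.ofReal_coe_nnreal]
  rw [hmin]
  rcases (show 0 ≤ min ‖f x‖ T by positivity).eq_or_lt' with ht | ht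
  · simp [ht, hq0]
  set t := min ‖f x‖ T
  have hm : 0 < M.toReal := ENNReal.toReal_pos hM0 hM
  have hlevel : μ {y | t / 6 < ‖f y‖} ≤ ENNReal.ofReal (M.toReal / (t / 6) ^ q) := by
    rw [ENNReal.ofReal_div_of_pos (by positivity), ENNReal.ofReal_toReal hM]
    exact measure_lt_norm_le_lintegral_min_div hf hq0.le (by positivity)
      ((div_le_self ht.le (by norm_num)).trans (min_le_right _ _))
  rw [ENNReal.ofReal_rpow_of_pos ht, ← ENNReal.ofReal_toReal hM,
    ENNReal.ofReal_rpow_of_pos hm, ← ENNReal.ofReal_mul hC.le]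
  exact hpointwise f hf x t _ ht (min_le_left _ _) hm hlevel

theorem exists_lintegral_min_enorm_rpow_le (hp : 0 < p) (hs : 0 ≤ s) (hsp : s * p < finrank ℝ E)
    {q : ℝ} (hq : q = fracSobolevExponent (finrank ℝ E) s p) :
    ∃ C : ℝ, 0 < C ∧ ∀ f : E → E, AEStronglyMeasurable f μ → ∀ T : ℝ≥0,
      ∫⁻ y, min ‖f y‖ₑ T ^ q ∂μ ≠ ∞ →
        (∫⁻ y, min ‖f y‖ₑ T ^ q ∂μ) ^ (p / q) ≤ ENNReal.ofReal C * projGagliardo μ s p f := by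
  have hn : (0 : ℝ) < finrank ℝ E := (by positivity : 0 ≤ s * p).trans_lt hsp
  obtain ⟨C, hC, hpointwise⟩ := exists_min_enorm_rpow_le μ hp hs hsp hq
  refine ⟨C, hC, fun f hf T hM => ?_⟩
  rw [hq, ← one_sub_div_eq_div_fracSobolevExponent hn.ne' hp.ne', ← hq]
  refine rpow_one_sub_le_of_le_mul_rpow ((div_lt_one hn).mpr hsp) hM ?_
  set M := ∫⁻ y, min ‖f y‖ₑ T ^ q ∂μ
  rcases eq_or_ne M 0 with hM0 | hM0
  · simp [hM0]
  calc M ≤ ∫⁻ x, ENNReal.ofReal C * M ^ (s * p / finrank ℝ E) *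
          ∫⁻ y, projGagliardoKernel s p f x y ∂μ ∂μ := lintegral_mono (hpointwise f hf T hM0 hM)
    _ = ENNReal.ofReal C * M ^ (s * p / finrank ℝ E) * projGagliardo μ s p f :=
        lintegral_const_mul' _ _ (ENNReal.mul_ne_top ENNReal.ofReal_ne_top
          (ENNReal.rpow_ne_top_of_nonneg (by positivity) hM))
    _ = ENNReal.ofReal C * projGagliardo μ s p f * M ^ (s * p / finrank ℝ E) :=
        mul_right_comm _ _ _

theorem fractional_sobolev_embedding_proj_general (hp : 0 < p) (hs : 0 ≤ s)
    (hsp : s * p < finrank ℝ E) :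
    ∃ C : ℝ, 0 < C ∧ ∀ f : E → E, AEStronglyMeasurable f μ → μ (Function.support f) ≠ ∞ →
      eLpNorm f (ENNReal.ofReal (fracSobolevExponent (finrank ℝ E) s p)) μ ^ p ≤
        ENNReal.ofReal C * projGagliardo μ s p f := by
  obtain ⟨q, hq⟩ : ∃ q, q = fracSobolevExponent (finrank ℝ E) s p := ⟨_, rfl⟩
  have hq0 : 0 < q :=
    hq ▸ fracSobolevExponent_pos ((by positivity : 0 ≤ s * p).trans_lt hsp) hp hsp
  obtain ⟨C, hC, htruncated⟩ := exists_lintegral_min_enorm_rpow_le μ hp hs hsp hq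
  refine ⟨C, hC, fun f hf hsupp => ?_⟩
  have hintegral : ∫⁻ y, ‖f y‖ₑ ^ q ∂μ ≤ (ENNReal.ofReal C * projGagliardo μ s p f) ^ (p / q)⁻¹ :=
    lintegral_enorm_rpow_le_of_forall_min_le hf hq0.le fun T =>
      (ENNReal.le_rpow_inv_iff (by positivity)).mpr
        (htruncated f hf T (lintegral_min_enorm_rpow_lt_top hq0 hsupp T).ne)
  rw [← hq, eLpNorm_eq_lintegral_rpow_enorm_toReal (ENNReal.ofReal_pos.mpr hq0).ne'
    ENNReal.ofReal_ne_top, ENNReal.toReal_ofReal hq0.le, ← ENNReal.rpow_mul, one_div_mul_eq_div]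
  exact (ENNReal.le_rpow_inv_iff (by positivity)).mp hintegral

end SobolevEmbedding

/-- **Fractional Sobolev embedding with the projected seminorm.** Let `s ∈ (0,1)` and
`p ∈ (1,∞)` with `sp < d`, and set `p*_s = dp/(d − sp)`. There is `C = C(d,p,s) > 0` such
that every measurable, compactly supported vector field `f : ℝ^d → ℝ^d` satisfies
`‖f‖_{L^{p*_s}(ℝ^d)}^p ≤ C [f]_{𝒳^s_p(ℝ^d)}^p`. -/
theorem fractional_sobolev_embedding_proj (d : ℕ) (s p : ℝ) (hs : s ∈ Set.Ioo (0 : ℝ) 1)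
    (hp : 1 < p) (hspd : s * p < d) :
    ∃ C : ℝ, 0 < C ∧
      ∀ f : Ed d → Ed d, Measurable f → HasCompactSupport f →
        eLpNorm f (ENNReal.ofReal ((d : ℝ) * p / ((d : ℝ) - s * p))) volume ^ p ≤
          ENNReal.ofReal C * projGagP d s p Set.univ f := by
  obtain ⟨C, hC, hbound⟩ := fractional_sobolev_embedding_proj_general (E := Ed d) volume
    (zero_lt_one.trans hp) hs.1.le (by simpa using hspd)
  refine ⟨C, hC, fun f hf hfc => ?_⟩
  have hsupp := ((measure_mono (subset_tsupport f)).trans_lt (hfc.isCompact.measure_lt_top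
    (μ := volume))).ne
  simpa [fracSobolevExponent, projGagP_univ] using hbound f hf.aestronglyMeasurable hsupp
end
end

section
/- Density of smooth compactly supported fields by mollification: Let Ω ⊆ ℝ^d be open, s ∈ (0,1), p ≥ 2. Suppose u ∈ L^p(ℝ^d; ℝ^d) with [u]_{𝒳^s_p(ℝ^d)} < ∞ and the support of u is a compact subset of Ω. Then there exists a sequence (u_n) of vector fields in C_c^∞(Ω; ℝ^d) such that ‖u_n − u‖_{L^p(ℝ^d)} → 0 and [u_n − u]_{𝒳^s_p(ℝ^d)} → 0 as n → ∞; the u_n can be taken to be mollifications u ∗ φ_δ of u with a standard mollifier φ_δ, δ → 0. -/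
open MeasureTheory Filter Set
open scoped ENNReal NNReal Topology

noncomputable section

/-- The mollification `(u ∗ φ_δ)(x) = ∫ δ^{−d} φ(y/δ) u(x − y) dy`. -/
def mollify (d : ℕ) (φ : Ed d → ℝ) (δ : ℝ) (u : Ed d → Ed d) (x : Ed d) : Ed d :=
  ∫ y, (δ ^ (-(d : ℝ)) * φ (δ⁻¹ • y)) • u (x - y)

/-!
Let `ν_δ` be the probability measure `φ_δ dw`. Mollification is the average of translates
`(u ∗ φ_δ)(x) = ∫ u(x - w) dν_δ(w)`, so by Jensen's inequality and Tonelli's theorem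
`‖u ∗ φ_δ - u‖_p ^ p ≤ ∫ ‖u(· - w) - u‖_p ^ p dν_δ(w)`, which tends to `0` because translations
act continuously on `L^p`. The substitution `y = x + z` writes the seminorm `[u]_{𝒳^s_p}` as the
`L^p(ℝ^d × ℝ^d)` norm of a projected difference quotient `Q u (x, z)`. Since `Q` is linear and
commutes with translations in `x`, `Q (u ∗ φ_δ)` is an average of the translates of `Q u` by the
vectors `(-w, 0)`, and the same argument on `ℝ^d × ℝ^d` gives convergence in the seminorm.
-/

open Module
open scoped Convolution Pointwise

section Averages

variable {W X F : Type*} [MeasurableSpace W] [MeasurableSpace X] [NormedAddCommGroup F]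
  {ν : Measure W} {μ : Measure X} {p : ℝ≥0∞}

lemma eLpNorm_rpow_toReal_eq_lintegral (hp0 : p ≠ 0) (hp_top : p ≠ ∞) (f : W → F) :
    eLpNorm f p ν ^ p.toReal = ∫⁻ w, ‖f w‖ₑ ^ p.toReal ∂ν := by
  rw [eLpNorm_eq_lintegral_rpow_enorm_toReal hp0 hp_top, one_div,
    ENNReal.rpow_inv_rpow (ENNReal.toReal_pos hp0 hp_top).ne']

variable [NormedSpace ℝ F] [IsProbabilityMeasure ν]

lemma enorm_integral_le_eLpNorm (hp : 1 ≤ p) {g : W → F} (hg : AEStronglyMeasurable g ν) :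
    ‖∫ w, g w ∂ν‖ₑ ≤ eLpNorm g p ν :=
  calc ‖∫ w, g w ∂ν‖ₑ ≤ ∫⁻ w, ‖g w‖ₑ ∂ν := enorm_integral_le_lintegral_enorm g
    _ = eLpNorm g 1 ν := eLpNorm_one_eq_lintegral_enorm.symm
    _ ≤ eLpNorm g p ν := eLpNorm_le_eLpNorm_of_exponent_le hp hg

lemma eLpNorm_integral_rpow_le_lintegral_eLpNorm_rpow [SFinite μ] (hp : 1 ≤ p) (hp_top : p ≠ ∞)
    {f : W → X → F} (hf : AEStronglyMeasurable (Function.uncurry f) (ν.prod μ)) :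
    eLpNorm (fun x => ∫ w, f w x ∂ν) p μ ^ p.toReal ≤
      ∫⁻ w, eLpNorm (f w) p μ ^ p.toReal ∂ν := by
  have hp0 : p ≠ 0 := (one_pos.trans_le hp).ne'
  simp only [eLpNorm_rpow_toReal_eq_lintegral hp0 hp_top]
  calc ∫⁻ x, ‖∫ w, f w x ∂ν‖ₑ ^ p.toReal ∂μ
      ≤ ∫⁻ x, ∫⁻ w, ‖f w x‖ₑ ^ p.toReal ∂ν ∂μ := by
        refine lintegral_mono_ae ?_
        filter_upwards [hf.prod_swap.prodMk_left] with x hx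
        rw [← eLpNorm_rpow_toReal_eq_lintegral hp0 hp_top]
        gcongr
        exact enorm_integral_le_eLpNorm hp hx
    _ = ∫⁻ w, ∫⁻ x, ‖f w x‖ₑ ^ p.toReal ∂μ ∂ν :=
        (lintegral_lintegral_swap (hf.enorm.pow_const _)).symm

end Averages

section Translations

variable {W X F : Type*} [MeasurableSpace W] [AddGroup X] [TopologicalSpace X]
  [IsTopologicalAddGroup X] [MeasurableSpace X] [BorelSpace X] [NormedAddCommGroup F]
  {μ : Measure X} {p : ℝ≥0∞}

lemma tendsto_eLpNorm_translate_sub [IsLocallyFiniteMeasure μ] [μ.InnerRegularCompactLTTop]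
    [μ.IsAddLeftInvariant] (hp : 1 ≤ p) (hp_top : p ≠ ∞) {f : X → F} (hf : MemLp f p μ) :
    Tendsto (fun v : X => eLpNorm (fun x => f (v + x) - f x) p μ) (𝓝 0) (𝓝 0) := by
  have : Fact (1 ≤ p) := ⟨hp⟩
  have : Fact (p ≠ ∞) := ⟨hp_top⟩
  have hcont : Continuous fun v : X => DomAddAct.mk v +ᵥ hf.toLp f :=
    DomAddAct.continuous_mk.vadd continuous_const
  have hlim : Tendsto (fun v : X => DomAddAct.mk v +ᵥ hf.toLp f) (𝓝 0) (𝓝 (hf.toLp f)) := by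
    simpa only [DomAddAct.mk_zero, zero_vadd] using hcont.tendsto 0
  refine (tendsto_iff_edist_tendsto_0.1 hlim).congr fun v => ?_
  rw [DomAddAct.mk_vadd_toLp, Lp.edist_toLp_toLp]
  rfl

lemma aestronglyMeasurable_uncurry_translate_sub [SecondCountableTopology X] [SFinite μ]
    [μ.IsAddLeftInvariant] {ν : Measure W} [SFinite ν] {f : X → F}
    (hf : AEStronglyMeasurable f μ) {τ : W → X} (hτ : Measurable τ) :
    AEStronglyMeasurable (Function.uncurry fun w x => f (τ w + x) - f x) (ν.prod μ) := by
  have hadd : Measure.QuasiMeasurePreserving (fun q : W × X => τ q.1 + q.2) (ν.prod μ) μ :=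
    QuasiMeasurePreserving.prod_of_right (by fun_prop) <| ae_of_all _ fun w =>
      (measurePreserving_add_left μ (τ w)).quasiMeasurePreserving
  exact (hf.comp_quasiMeasurePreserving hadd).sub
    (hf.comp_quasiMeasurePreserving Measure.quasiMeasurePreserving_snd)

lemma tendsto_eLpNorm_integral_translate_sub [NormedSpace ℝ F] [Zero W] [TopologicalSpace W]
    [SecondCountableTopology X] [IsLocallyFiniteMeasure μ] [μ.InnerRegularCompactLTTop]
    [μ.IsAddLeftInvariant] (hp : 1 ≤ p) (hp_top : p ≠ ∞)
    {f : X → F} (hf : MemLp f p μ) {ι : Type*} {ν : ι → Measure W} [∀ i, IsProbabilityMeasure (ν i)]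
    {l : Filter ι} (hν : ∀ U ∈ 𝓝 (0 : W), ∀ᶠ i in l, ∀ᵐ w ∂ν i, w ∈ U)
    {τ : W → X} (hτ : Measurable τ) (hτ0 : Tendsto τ (𝓝 0) (𝓝 0)) :
    Tendsto (fun i => eLpNorm (fun x => ∫ w, (f (τ w + x) - f x) ∂ν i) p μ) l (𝓝 0) := by
  have htranslate := (tendsto_eLpNorm_translate_sub hp hp_top hf).comp hτ0
  rw [ENNReal.tendsto_nhds_zero] at htranslate ⊢
  intro ε hε
  filter_upwards [hν _ (htranslate ε hε)] with i hi
  have hp_pos : 0 < p.toReal := ENNReal.toReal_pos (one_pos.trans_le hp).ne' hp_top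
  rw [← ENNReal.rpow_le_rpow_iff hp_pos]
  calc eLpNorm (fun x => ∫ w, (f (τ w + x) - f x) ∂ν i) p μ ^ p.toReal
      ≤ ∫⁻ w, eLpNorm (fun x => f (τ w + x) - f x) p μ ^ p.toReal ∂ν i :=
        eLpNorm_integral_rpow_le_lintegral_eLpNorm_rpow hp hp_top
          (aestronglyMeasurable_uncurry_translate_sub hf.1 hτ)
    _ ≤ ∫⁻ _, ε ^ p.toReal ∂ν i := by
        refine lintegral_mono_ae ?_
        filter_upwards [hi] with w hw
        gcongr
        exact hw
    _ = ε ^ p.toReal := by simp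

end Translations

section Mollifiers

variable {E : Type*} [NormedAddCommGroup E] [NormedSpace ℝ E]

/-- The rescaled function `φ_δ = δ^{-dim E} φ(· / δ)`, with the real power used in `mollify`. -/
def rescale (φ : E → ℝ) (δ : ℝ) (y : E) : ℝ := δ ^ (-(finrank ℝ E : ℝ)) * φ (δ⁻¹ • y)

lemma support_rescale_subset {φ : E → ℝ} {r δ : ℝ} (hδ : 0 < δ)
    (hφ : Function.support φ ⊆ Metric.ball 0 r) :
    Function.support (rescale φ δ) ⊆ Metric.ball 0 (δ * r) := by
  intro y hy
  have hball : δ⁻¹ • y ∈ Metric.ball (0 : E) r := hφ (right_ne_zero_of_mul hy)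
  rwa [mem_ball_zero_iff, norm_smul, norm_inv, Real.norm_of_nonneg hδ.le,
    inv_mul_lt_iff₀ hδ, ← mem_ball_zero_iff] at hball

variable [MeasurableSpace E]

lemma integral_rescale [BorelSpace E] [FiniteDimensional ℝ E] {μ : Measure E}
    [μ.IsAddHaarMeasure] (φ : E → ℝ) {δ : ℝ} (hδ : 0 < δ) :
    ∫ y, rescale φ δ y ∂μ = ∫ y, φ y ∂μ := by
  have hpow : 0 < δ ^ finrank ℝ E := pow_pos hδ _
  simp only [rescale, integral_const_mul, Measure.integral_comp_inv_smul, smul_eq_mul,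
    Real.rpow_neg hδ.le, Real.rpow_natCast, abs_of_pos hpow]
  rw [inv_mul_cancel_left₀ hpow.ne']

/-- `ρ` is a mollifier of radius `r`: smooth, nonnegative, of integral one, and vanishing outside
the open ball `B_r(0)`. Standard mollifiers are the case `r = 1`. -/
structure IsMollifier (μ : Measure E) (r : ℝ) (ρ : E → ℝ) : Prop where
  contDiff : ContDiff ℝ (⊤ : ℕ∞) ρ
  nonneg : ∀ x, 0 ≤ ρ x
  support_subset : Function.support ρ ⊆ Metric.ball 0 r
  integral_eq_one : ∫ x, ρ x ∂μ = 1

lemma exists_isMollifier [BorelSpace E] [FiniteDimensional ℝ E] (μ : Measure E)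
    [IsLocallyFiniteMeasure μ] [μ.IsOpenPosMeasure] {r : ℝ} (hr : 0 < r) :
    ∃ ρ : E → ℝ, IsMollifier μ r ρ :=
  let b : ContDiffBump (0 : E) := ⟨r / 2, r, half_pos hr, half_lt_self hr⟩
  ⟨b.normed μ, b.contDiff_normed, b.nonneg_normed, b.support_normed_eq.subset, b.integral_normed⟩

/-- The measure `ρ dμ`, against which convolution with `ρ` is an average of translates. -/
def kernelMeasure (μ : Measure E) (ρ : E → ℝ) : Measure E :=
  μ.withDensity fun y => ENNReal.ofReal (ρ y)

namespace IsMollifier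

variable {μ : Measure E} {ρ : E → ℝ} {r : ℝ} {F : Type*} [NormedAddCommGroup F]
  [NormedSpace ℝ F] {u : E → F}

lemma tsupport_convolution_subset (hρ : IsMollifier μ r ρ) (u : E → F) :
    tsupport (ρ ⋆[ContinuousLinearMap.lsmul ℝ ℝ, μ] u) ⊆ Metric.cthickening r (tsupport u) := by
  refine closure_minimal (fun x hx => ?_) Metric.isClosed_cthickening
  obtain ⟨a, ha, b, hb, rfl⟩ := support_convolution_subset_swap _ hx
  have hb_norm : ‖b‖ < r := mem_ball_zero_iff.1 (hρ.support_subset hb)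
  exact Metric.mem_cthickening_of_dist_le _ a _ _ (subset_tsupport _ ha)
    (by simpa only [dist_self_add_left] using hb_norm.le)

lemma hasCompactSupport [ProperSpace E] (hρ : IsMollifier μ r ρ) : HasCompactSupport ρ :=
  .of_support_subset_isCompact (isCompact_closedBall 0 r)
    (hρ.support_subset.trans Metric.ball_subset_closedBall)

variable [BorelSpace E]

lemma measurable_ofReal (hρ : IsMollifier μ r ρ) : Measurable fun y => ENNReal.ofReal (ρ y) :=
  hρ.contDiff.continuous.measurable.ennreal_ofReal

lemma ae_kernelMeasure_mem_ball (hρ : IsMollifier μ r ρ) :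
    ∀ᵐ w ∂kernelMeasure μ ρ, w ∈ Metric.ball 0 r := by
  rw [kernelMeasure, ae_withDensity_iff hρ.measurable_ofReal]
  refine ae_of_all _ fun w hw => hρ.support_subset fun h => hw ?_
  rw [h, ENNReal.ofReal_zero]

lemma eventually_ae_kernelMeasure_mem {ι : Type*} {l : Filter ι} {r : ι → ℝ} {ρ : ι → E → ℝ}
    (hρ : ∀ i, IsMollifier μ (r i) (ρ i)) (hr : Tendsto r l (𝓝 0)) {U : Set E}
    (hU : U ∈ 𝓝 0) : ∀ᶠ i in l, ∀ᵐ w ∂kernelMeasure μ (ρ i), w ∈ U := by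
  obtain ⟨ε, hε, hεU⟩ := Metric.mem_nhds_iff.1 hU
  filter_upwards [hr.eventually (gt_mem_nhds hε)] with i hi
  filter_upwards [(hρ i).ae_kernelMeasure_mem_ball] with w hw
  exact hεU (Metric.ball_subset_ball hi.le hw)

lemma convolution_eq_integral (hρ : IsMollifier μ r ρ) (u : E → F) (x : E) :
    (ρ ⋆[ContinuousLinearMap.lsmul ℝ ℝ, μ] u) x = ∫ w, u (x - w) ∂kernelMeasure μ ρ := by
  rw [kernelMeasure, integral_withDensity_eq_integral_toReal_smul hρ.measurable_ofReal
    (ae_of_all _ fun _ => ENNReal.ofReal_lt_top), convolution_lsmul]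
  simp only [ENNReal.toReal_ofReal (hρ.nonneg _)]

variable [FiniteDimensional ℝ E]

lemma isProbabilityMeasure_kernelMeasure [IsFiniteMeasureOnCompacts μ]
    (hρ : IsMollifier μ r ρ) : IsProbabilityMeasure (kernelMeasure μ ρ) where
  measure_univ := by
    have hint : Integrable ρ μ :=
      hρ.contDiff.continuous.integrable_of_hasCompactSupport hρ.hasCompactSupport
    rw [kernelMeasure, withDensity_apply _ .univ, setLIntegral_univ,
      ← ofReal_integral_eq_lintegral_ofReal hint (ae_of_all _ hρ.nonneg), hρ.integral_eq_one,
      ENNReal.ofReal_one]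

variable [μ.IsAddHaarMeasure]

lemma rescale (hρ : IsMollifier μ r ρ) {δ : ℝ} (hδ : 0 < δ) :
    IsMollifier μ (δ * r) (rescale ρ δ) where
  contDiff := contDiff_const.mul (hρ.contDiff.comp (contDiff_const_smul δ⁻¹))
  nonneg y := mul_nonneg (by positivity) (hρ.nonneg _)
  support_subset := support_rescale_subset hδ hρ.support_subset
  integral_eq_one := (integral_rescale ρ hδ).trans hρ.integral_eq_one

lemma contDiff_convolution (hρ : IsMollifier μ r ρ)
    (hu : LocallyIntegrable u μ) :
    ContDiff ℝ (⊤ : ℕ∞) (ρ ⋆[ContinuousLinearMap.lsmul ℝ ℝ, μ] u) :=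
  hρ.hasCompactSupport.contDiff_convolution_left _ hρ.contDiff hu

lemma integrable_comp_sub (hρ : IsMollifier μ r ρ) (hu : LocallyIntegrable u μ) (x : E) :
    Integrable (fun w => u (x - w)) (kernelMeasure μ ρ) := by
  rw [kernelMeasure, integrable_withDensity_iff_integrable_smul' hρ.measurable_ofReal
    (ae_of_all _ fun _ => ENNReal.ofReal_lt_top)]
  simp only [ENNReal.toReal_ofReal (hρ.nonneg _)]
  exact hρ.hasCompactSupport.convolutionExists_left (ContinuousLinearMap.lsmul ℝ ℝ)
    hρ.contDiff.continuous hu x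

lemma integrable_translate_sub (hρ : IsMollifier μ r ρ) (hu : LocallyIntegrable u μ) (x : E) :
    Integrable (fun w => u (-w + x) - u x) (kernelMeasure μ ρ) := by
  have := hρ.isProbabilityMeasure_kernelMeasure
  simp only [neg_add_eq_sub]
  exact (hρ.integrable_comp_sub hu x).sub (integrable_const _)

lemma convolution_sub_eq_integral [CompleteSpace F] (hρ : IsMollifier μ r ρ)
    (hu : LocallyIntegrable u μ) (x : E) :
    (ρ ⋆[ContinuousLinearMap.lsmul ℝ ℝ, μ] u) x - u x =
      ∫ w, (u (-w + x) - u x) ∂kernelMeasure μ ρ := by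
  have := hρ.isProbabilityMeasure_kernelMeasure
  simp only [neg_add_eq_sub]
  rw [integral_sub (hρ.integrable_comp_sub hu x) (integrable_const _), integral_const,
    probReal_univ, one_smul, hρ.convolution_eq_integral]

lemma tendsto_eLpNorm_convolution_sub [CompleteSpace F] {ι : Type*} {l : Filter ι} {r : ι → ℝ}
    {ρ : ι → E → ℝ} (hρ : ∀ i, IsMollifier μ (r i) (ρ i)) (hr : Tendsto r l (𝓝 0))
    {p : ℝ≥0∞} (hp : 1 ≤ p) (hp_top : p ≠ ∞) (hu : MemLp u p μ) :
    Tendsto (fun i => eLpNorm (fun x => (ρ i ⋆[ContinuousLinearMap.lsmul ℝ ℝ, μ] u) x - u x) p μ)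
      l (𝓝 0) := by
  have := fun i => (hρ i).isProbabilityMeasure_kernelMeasure
  simp only [fun i => (hρ i).convolution_sub_eq_integral (hu.locallyIntegrable hp)]
  exact tendsto_eLpNorm_integral_translate_sub hp hp_top hu
    (fun _ => eventually_ae_kernelMeasure_mem hρ hr) measurable_neg
    (continuous_neg.tendsto' 0 0 neg_zero)

end IsMollifier

end Mollifiers

section ProjectedQuotients

variable {E : Type*} [NormedAddCommGroup E] [InnerProductSpace ℝ E]

/-- The projected difference quotient `⟨f(x + z) - f(x), z / ‖z‖⟩ / ‖z‖^a` at `q = (x, z)`. For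
`a = (d + s p) / p` its `L^p` norm on `ℝ^d × ℝ^d` is the seminorm `[f]_{𝒳^s_p(ℝ^d)}`; it is `0`
on the diagonal `z = 0`. -/
def projQuotient (a : ℝ) (f : E → E) (q : E × E) : ℝ :=
  inner ℝ (f (q.1 + q.2) - f q.1) q.2 / ‖q.2‖ / ‖q.2‖ ^ a

lemma enorm_projQuotient_div_rpow {p : ℝ} (hp : 0 < p) (t : ℝ) (f : E → E) (x z : E) :
    ‖projQuotient (t / p) f (x, z)‖ₑ ^ p =
      ENNReal.ofReal ((|(inner ℝ (f (x + z) - f x) z : ℝ)| / ‖z‖) ^ p / ‖z‖ ^ t) := by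
  rw [Real.enorm_eq_ofReal_abs, ENNReal.ofReal_rpow_of_nonneg (abs_nonneg _) hp.le, projQuotient,
    abs_div, abs_div, abs_norm, abs_of_nonneg (Real.rpow_nonneg (norm_nonneg z) _),
    Real.div_rpow (by positivity) (by positivity), ← Real.rpow_mul (norm_nonneg z),
    div_mul_cancel₀ _ hp.ne']

lemma projQuotient_sub (a : ℝ) (f g : E → E) (q : E × E) :
    projQuotient a (fun x => f x - g x) q = projQuotient a f q - projQuotient a g q := by
  simp only [projQuotient, ← sub_div, ← inner_sub_left, sub_sub_sub_comm]

lemma projQuotient_translate (a : ℝ) (f : E → E) (v : E) (q : E × E) :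
    projQuotient a (fun x => f (v + x)) q = projQuotient a f ((v, 0) + q) := by
  simp only [projQuotient, Prod.fst_add, Prod.snd_add, zero_add, add_assoc]

lemma projQuotient_integral [CompleteSpace E] {W : Type*} [MeasurableSpace W] {ν : Measure W}
    (a : ℝ) {f : W → E → E} (hf : ∀ x, Integrable (fun w => f w x) ν) (q : E × E) :
    projQuotient a (fun x => ∫ w, f w x ∂ν) q = ∫ w, projQuotient a (f w) q ∂ν := by
  simp only [projQuotient, integral_div, real_inner_comm q.2]
  rw [integral_inner (f := fun w => f w (q.1 + q.2) - f w q.1) ((hf _).sub (hf _)),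
    integral_sub (hf _) (hf _)]

variable [MeasurableSpace E] [BorelSpace E] {μ : Measure E}

lemma aestronglyMeasurable_projQuotient [SecondCountableTopology E] [SFinite μ]
    [μ.IsAddLeftInvariant] (a : ℝ) {f : E → E} (hf : AEStronglyMeasurable f μ) :
    AEStronglyMeasurable (projQuotient a f) (μ.prod μ) := by
  have hincrement : AEStronglyMeasurable (fun q : E × E => f (q.1 + q.2) - f q.1) (μ.prod μ) :=
    (hf.comp_quasiMeasurePreserving (quasiMeasurePreserving_add μ μ)).sub
      (hf.comp_quasiMeasurePreserving Measure.quasiMeasurePreserving_fst)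
  have hinner := (hincrement.inner (𝕜 := ℝ) measurable_snd.aestronglyMeasurable).aemeasurable
  exact ((hinner.div (by fun_prop)).div (by fun_prop)).aestronglyMeasurable

variable [FiniteDimensional ℝ E]

lemma IsMollifier.projQuotient_convolution_sub [μ.IsAddHaarMeasure] {r : ℝ} {ρ : E → ℝ}
    (hρ : IsMollifier μ r ρ) (a : ℝ) {u : E → E} (hu : LocallyIntegrable u μ) (q : E × E) :
    projQuotient a (fun x => (ρ ⋆[ContinuousLinearMap.lsmul ℝ ℝ, μ] u) x - u x) q =
      ∫ w, (projQuotient a u ((-w, 0) + q) - projQuotient a u q) ∂kernelMeasure μ ρ := by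
  simp only [hρ.convolution_sub_eq_integral hu]
  rw [projQuotient_integral a (hρ.integrable_translate_sub hu)]
  simp only [projQuotient_sub, projQuotient_translate]

lemma IsMollifier.tendsto_eLpNorm_projQuotient_convolution_sub [μ.IsAddHaarMeasure]
    {ι : Type*} {l : Filter ι} {r : ι → ℝ} {ρ : ι → E → ℝ}
    (hρ : ∀ i, IsMollifier μ (r i) (ρ i)) (hr : Tendsto r l (𝓝 0)) {p : ℝ≥0∞} (hp : 1 ≤ p)
    (hp_top : p ≠ ∞) (a : ℝ) {u : E → E} (hu : LocallyIntegrable u μ)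
    (hQ : MemLp (projQuotient a u) p (μ.prod μ)) :
    Tendsto (fun i => eLpNorm (projQuotient a fun x =>
      (ρ i ⋆[ContinuousLinearMap.lsmul ℝ ℝ, μ] u) x - u x) p (μ.prod μ)) l (𝓝 0) := by
  have := fun i => (hρ i).isProbabilityMeasure_kernelMeasure
  refine (tendsto_eLpNorm_integral_translate_sub hp hp_top hQ
    (fun _ => eventually_ae_kernelMeasure_mem hρ hr) (τ := fun w => (-w, 0)) (by fun_prop)
    (Continuous.tendsto' (by fun_prop) 0 0 (by simp))).congr fun i => ?_
  simp only [← (hρ i).projQuotient_convolution_sub a hu]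

end ProjectedQuotients

section Mollification

variable {d : ℕ} {u : Ed d → Ed d} {φ : Ed d → ℝ} {s p : ℝ}

lemma projSem_univ_eq_eLpNorm (s : ℝ) (hp : 0 < p) {f : Ed d → Ed d}
    (hf : AEStronglyMeasurable f volume) :
    projSem d s p Set.univ f = eLpNorm (projQuotient (((d : ℝ) + s * p) / p) f)
      (ENNReal.ofReal p) ((volume : Measure (Ed d)).prod volume) := by
  rw [eLpNorm_eq_lintegral_rpow_enorm_toReal (by simpa using hp) ENNReal.ofReal_ne_top,
    ENNReal.toReal_ofReal hp.le,
    lintegral_prod _ ((aestronglyMeasurable_projQuotient _ hf).enorm.pow_const p)]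
  simp only [projSem, projGagP, setLIntegral_univ, enorm_projQuotient_div_rpow hp]
  congr 2 with x
  rw [← lintegral_add_left_eq_self _ x]
  simp only [add_sub_cancel_left]

lemma memLp_projQuotient (hp : 0 < p) (hu : AEStronglyMeasurable u volume)
    (hX : projGagP d s p Set.univ u < ∞) :
    MemLp (projQuotient (((d : ℝ) + s * p) / p) u) (ENNReal.ofReal p)
      ((volume : Measure (Ed d)).prod volume) := by
  refine ⟨aestronglyMeasurable_projQuotient _ hu, ?_⟩
  rw [← projSem_univ_eq_eLpNorm s hp hu]
  exact ENNReal.rpow_lt_top_of_nonneg (by positivity) hX.ne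

lemma mollify_eq_convolution (φ : Ed d → ℝ) (δ : ℝ) (u : Ed d → Ed d) :
    mollify d φ δ u = rescale φ δ ⋆[ContinuousLinearMap.lsmul ℝ ℝ, volume] u := by
  ext1 x
  simp only [mollify, convolution_lsmul, rescale, finrank_euclideanSpace_fin]

namespace IsMollifier

variable {r : ℝ} {ι : Type*} {l : Filter ι} {δ : ι → ℝ}

lemma tendsto_eLpNorm_mollify_sub (hφ : IsMollifier volume r φ) (hδ : ∀ i, 0 < δ i)
    (hδ0 : Tendsto δ l (𝓝 0)) {q : ℝ≥0∞} (hq : 1 ≤ q) (hq_top : q ≠ ∞) (hu : MemLp u q volume) :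
    Tendsto (fun i => eLpNorm (fun x => mollify d φ (δ i) u x - u x) q volume) l (𝓝 0) := by
  simp only [mollify_eq_convolution]
  exact tendsto_eLpNorm_convolution_sub (fun i => hφ.rescale (hδ i))
    (zero_mul r ▸ hδ0.mul_const r) hq hq_top hu

lemma tendsto_projSem_mollify_sub (hφ : IsMollifier volume r φ) (hδ : ∀ i, 0 < δ i)
    (hδ0 : Tendsto δ l (𝓝 0)) (hp : 1 ≤ p) (hu : MemLp u (ENNReal.ofReal p) volume)
    (hX : projGagP d s p Set.univ u < ∞) :
    Tendsto (fun i => projSem d s p Set.univ fun x => mollify d φ (δ i) u x - u x) l (𝓝 0) := by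
  have hp0 : 0 < p := one_pos.trans_le hp
  have hp1 : 1 ≤ ENNReal.ofReal p := ENNReal.one_le_ofReal.2 hp
  have hloc : LocallyIntegrable u volume := hu.locallyIntegrable hp1
  have hρ := fun i => hφ.rescale (hδ i)
  simp only [mollify_eq_convolution]
  refine (tendsto_eLpNorm_projQuotient_convolution_sub hρ (zero_mul r ▸ hδ0.mul_const r) hp1
    ENNReal.ofReal_ne_top _ hloc (memLp_projQuotient hp0 hu.1 hX)).congr fun i =>
      (projSem_univ_eq_eLpNorm s hp0 ?_).symm
  exact ((hρ i).contDiff_convolution hloc).continuous.aestronglyMeasurable.sub hu.1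

end IsMollifier

theorem density_smooth_compactly_supported_general {Ω : Set (Ed d)} (hΩ : IsOpen Ω) (s : ℝ)
    (hp : 1 ≤ p) (hu : MemLp u (ENNReal.ofReal p) volume) (hX : projGagP d s p Set.univ u < ∞)
    (hc : IsCompact (tsupport u)) (hsub : tsupport u ⊆ Ω) (hφ : IsMollifier volume 1 φ) :
    ∃ δ : ℕ → ℝ, (∀ n, 0 < δ n) ∧ Tendsto δ atTop (𝓝 0) ∧
      (∀ n, ContDiff ℝ (⊤ : ℕ∞) (mollify d φ (δ n) u) ∧
        HasCompactSupport (mollify d φ (δ n) u) ∧ tsupport (mollify d φ (δ n) u) ⊆ Ω) ∧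
      Tendsto (fun n => eLpNorm (fun x => mollify d φ (δ n) u x - u x)
        (ENNReal.ofReal p) volume) atTop (𝓝 0) ∧
      Tendsto (fun n => projSem d s p Set.univ (fun x => mollify d φ (δ n) u x - u x))
        atTop (𝓝 0) := by
  have hp1 : 1 ≤ ENNReal.ofReal p := ENNReal.one_le_ofReal.2 hp
  obtain ⟨r, hr, hthick⟩ := hc.exists_cthickening_subset_open hΩ hsub
  obtain ⟨δ, -, hδ, hδ0⟩ := exists_seq_strictAnti_tendsto' hr
  have hδ_pos : ∀ n, 0 < δ n := fun n => (hδ n).1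
  refine ⟨δ, hδ_pos, hδ0, fun n => ?_,
    hφ.tendsto_eLpNorm_mollify_sub hδ_pos hδ0 hp1 ENNReal.ofReal_ne_top hu,
    hφ.tendsto_projSem_mollify_sub hδ_pos hδ0 hp hu hX⟩
  have hρ : IsMollifier volume (δ n) (rescale φ (δ n)) := by
    simpa only [mul_one] using hφ.rescale (hδ_pos n)
  have hsupp := hρ.tsupport_convolution_subset u
  rw [mollify_eq_convolution]
  exact ⟨hρ.contDiff_convolution (hu.locallyIntegrable hp1),
    hc.cthickening.of_isClosed_subset (isClosed_tsupport _) hsupp,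
    (hsupp.trans (Metric.cthickening_mono (hδ n).2.le _)).trans hthick⟩

end Mollification

/-- **Density of smooth compactly supported fields by mollification.** Let `Ω ⊆ ℝ^d` be
open, `s ∈ (0,1)`, `p ≥ 2`, and let `u ∈ 𝒳^s_p(ℝ^d)` (i.e. `u ∈ L^p` with
`[u]_{𝒳^s_p(ℝ^d)} < ∞`) have compact support contained in `Ω`. Then there are a standard
mollifier `φ` and scales `δ_n > 0`, `δ_n → 0`, such that the mollifications
`u_n = u ∗ φ_{δ_n}` are in `C_c^∞(Ω; ℝ^d)` and `u_n → u` both in `L^p(ℝ^d)` and in the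
`𝒳^s_p(ℝ^d)` seminorm. -/
theorem density_smooth_compactly_supported (d : ℕ) (Ω : Set (Ed d)) (hΩ : IsOpen Ω)
    (s p : ℝ) (hs : s ∈ Set.Ioo (0 : ℝ) 1) (hp : 2 ≤ p)
    (u : Ed d → Ed d) (hu : MemLp u (ENNReal.ofReal p) volume)
    (hX : projGagP d s p Set.univ u < ∞)
    (hc : IsCompact (tsupport u)) (hsub : tsupport u ⊆ Ω) :
    ∃ (φ : Ed d → ℝ) (δ : ℕ → ℝ),
      ContDiff ℝ (⊤ : ℕ∞) φ ∧ (∀ x, 0 ≤ φ x) ∧ Function.support φ ⊆ Metric.ball 0 1 ∧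
      (∫ x, φ x) = 1 ∧
      (∀ n, 0 < δ n) ∧ Tendsto δ atTop (𝓝 0) ∧
      (∀ n, ContDiff ℝ (⊤ : ℕ∞) (mollify d φ (δ n) u) ∧
        HasCompactSupport (mollify d φ (δ n) u) ∧ tsupport (mollify d φ (δ n) u) ⊆ Ω) ∧
      Tendsto (fun n => eLpNorm (fun x => mollify d φ (δ n) u x - u x)
        (ENNReal.ofReal p) volume) atTop (𝓝 0) ∧
      Tendsto (fun n => projSem d s p Set.univ (fun x => mollify d φ (δ n) u x - u x))
        atTop (𝓝 0) := by
  obtain ⟨φ, hφ⟩ := exists_isMollifier (volume : Measure (Ed d)) one_pos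
  obtain ⟨δ, hδ⟩ := density_smooth_compactly_supported_general hΩ s (by linarith) hu hX hc hsub hφ
  exact ⟨φ, δ, hφ.contDiff, hφ.nonneg, hφ.support_subset, hφ.integral_eq_one, hδ⟩
end
end
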